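/- For every integer h ≥ 1, every real ε with 0 < ε ≤ 1, every real r > 0, and every K_h-minor-free edge-weighted graph G, there exists an r-cover 𝒟 of G such that every member of 𝒟 has weak diameter at most (4+ε)·r and the overlap of 𝒟 is at most C(h−2+2·⌈24h·ε⁻¹⌉, h−1) · (12+48ε⁻¹) · (h−1), where C(·,·) denotes the binomial coefficient. -/

import Mathlib

open scoped ENNReal

namespace ScatterDim

variable {V : Type}





/-- Total weight of a walk in an edge-weighted graph. -/
noncomputable def walkWeight {G : SimpleGraph V} (w : Sym2 V → ℝ≥0∞)
    {u v : V} (p : G.Walk u v) : ℝ≥0∞ :=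
  (p.edges.map w).sum

/-- Shortest-path metric of an edge-weighted graph: the infimum of the total
weights of walks between the two vertices. -/
noncomputable def gdist (G : SimpleGraph V) (w : Sym2 V → ℝ≥0∞) (u v : V) : ℝ≥0∞ :=
  ⨅ p : G.Walk u v, walkWeight w p

/-- Shortest-path distance measured within the subgraph induced on `S`
(`⊤` if one of the endpoints is not in `S`). -/
noncomputable def distOn (G : SimpleGraph V) (w : Sym2 V → ℝ≥0∞) (S : Set V)
    (u v : V) : ℝ≥0∞ :=
  ⨅ (hu : u ∈ S), ⨅ (hv : v ∈ S), ⨅ (p : (G.induce S).Walk ⟨u, hu⟩ ⟨v, hv⟩),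
    (p.edges.map (fun e => w (e.map Subtype.val))).sum

/-- Distance between two sets of vertices inside the subgraph induced on `S`. -/
noncomputable def setDistOn (G : SimpleGraph V) (w : Sym2 V → ℝ≥0∞) (S : Set V)
    (A B : Set V) : ℝ≥0∞ :=
  ⨅ a ∈ A, ⨅ b ∈ B, distOn G w S a b

/-- Distance from a point to a set. -/
noncomputable def pdist (G : SimpleGraph V) (w : Sym2 V → ℝ≥0∞) (u : V) (X : Set V) : ℝ≥0∞ :=
  ⨅ x ∈ X, gdist G w u x

/-- `Y` is weakly `r`-reachable from `X` (with respect to the partition `P`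
ordered by `le`): there is a path of total weight at most `r` from a vertex of `X`
to a vertex of `Y` in the subgraph induced on the union of the parts `Z` with `Y ⪯ Z`. -/
def WReach (G : SimpleGraph V) (w : Sym2 V → ℝ≥0∞) (P : Set (Set V))
    (le : Set V → Set V → Prop) (r : ℝ) (X Y : Set V) : Prop :=
  setDistOn G w (⋃₀ {Z | Z ∈ P ∧ le Y Z}) X Y ≤ ENNReal.ofReal r

/-- The weak coloring number of `G` with respect to the partition `P`
and the order `le`: the maximum over `X ∈ P` of the number of parts weakly
`r`-reachable from `X`. -/
noncomputable def wcol (G : SimpleGraph V) (w : Sym2 V → ℝ≥0∞) (P : Set (Set V))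
    (le : Set V → Set V → Prop) (r : ℝ) : ℕ :=
  ⨆ X ∈ P, {Y | Y ∈ P ∧ WReach G w P le r X Y}.ncard

/-- `le` is a total (linear) order on the collection `P`. -/
def IsLinearOrderOn {α : Type} (P : Set α) (le : α → α → Prop) : Prop :=
  (∀ X ∈ P, le X X) ∧
  (∀ X ∈ P, ∀ Y ∈ P, le X Y → le Y X → X = Y) ∧
  (∀ X ∈ P, ∀ Y ∈ P, ∀ Z ∈ P, le X Y → le Y Z → le X Z) ∧
  (∀ X ∈ P, ∀ Y ∈ P, le X Y ∨ le Y X)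

/-- An `ε`-ladder of width `r` and length `ℓ` in the metric `dist`. -/
def IsLadder (dist : V → V → ℝ≥0∞) (ε r : ℝ) (ℓ : ℕ) (x p : Fin ℓ → V) : Prop :=
  (∀ i j : Fin ℓ, j < i → dist (p j) (x i) ≤ ENNReal.ofReal r) ∧
  (∀ i : Fin ℓ, ENNReal.ofReal ((1 + ε) * r) < dist (p i) (x i))

/-- `G` contains the complete graph on `h` vertices as a minor, witnessed by
pairwise disjoint connected nonempty branch sets that are pairwise adjacent. -/
def HasCompleteMinor (G : SimpleGraph V) (h : ℕ) : Prop :=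
  ∃ B : Fin h → Set V,
    (∀ i, (G.induce (B i)).Connected) ∧
    (∀ i j, i ≠ j → Disjoint (B i) (B j)) ∧
    (∀ i j, i ≠ j → ∃ u ∈ B i, ∃ v ∈ B j, G.Adj u v)

/-- `(T, bag)` is a tree decomposition of `G`. -/
def IsTreeDecompOf {ι : Type} (G : SimpleGraph V) (T : SimpleGraph ι) (bag : ι → Set V) : Prop :=
  T.IsTree ∧
  (∀ u v : V, G.Adj u v → ∃ t, u ∈ bag t ∧ v ∈ bag t) ∧
  (∀ v : V, (T.induce {t | v ∈ bag t}).Connected)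

/-- `G` has treewidth at most `n`. -/
def TreewidthAtMost (G : SimpleGraph V) (n : ℕ) : Prop :=
  ∃ (ι : Type) (T : SimpleGraph ι) (bag : ι → Set V),
    IsTreeDecompOf G T bag ∧ ∀ t, (bag t).ncard ≤ n + 1

/-- `D` is an `r`-cover of the edge-weighted graph `(G, w)`. -/
def IsCover (G : SimpleGraph V) (w : Sym2 V → ℝ≥0∞) (r : ℝ) (D : Set (Set V)) : Prop :=
  ∀ v : V, ∃ A ∈ D, ∀ u : V, gdist G w v u ≤ ENNReal.ofReal r → u ∈ A

/-!
A cop decomposition partitions the vertices into supernodes that are created one at a time. Each new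
supernode is a union of geodesics that connect a component of the free vertices to all adjacent
earlier supernodes. Together with the component these supernodes form a clique minor, so there are
at most `h - 2` of them, and at most `h - 1` geodesics. Whenever a component loses its adjacency to
an earlier supernode `Y`, its vertices within distance `γ` of later supernodes join those, so that
`Y` is separated by a buffer of width `γ` from what remains. A supernode grows by at most `γ` each
time, once per earlier neighbour, and therefore stays within `γ (h - 1)` of its geodesics.

The cover consists of balls around the points of nets of the geodesics, each ball being taken among
the supernodes not created before that of its centre. The ball of radius `r` around a vertex is
contained in such a ball centred in the earliest supernode that it meets. For the overlap, the
earlier neighbours of each supernode are pairwise adjacent, and a walk to an earlier supernode can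
be followed by jumps towards it. Two consecutive jumps cross a buffer, so a walk of length less than
`m γ` makes fewer than `2 m` jumps, and the supernodes reached in this way are counted by multisets
of size `h - 1`. On each geodesic only boundedly many net points are close enough to matter.
-/

open scoped Finset NNReal

section Walks

/-- The graph `G` with edge weights `w` has a walk from `x` to `y` of weight at most `l` all of
whose vertices, except possibly the last one, lie in `S`. Leaving the last vertex unconstrained lets
the first exit from `S` be expressed directly. -/
inductive WalkWithin (G : SimpleGraph V) (w : Sym2 V → ℝ≥0) (S : Set V) : V → V → ℝ → Prop
  | nil {x : V} {l : ℝ} (hl : 0 ≤ l) : WalkWithin G w S x x l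
  | cons {x y z : V} {l l' : ℝ} (hx : x ∈ S) (hxy : G.Adj x y) (h : WalkWithin G w S y z l)
      (hl : w s(x, y) + l ≤ l') : WalkWithin G w S x z l'

variable {G : SimpleGraph V} {w : Sym2 V → ℝ≥0} {S S' : Set V} {x y z : V} {l l' : ℝ}

namespace WalkWithin

theorem nonneg (h : WalkWithin G w S x y l) : 0 ≤ l := by
  induction h with
  | nil hl => exact hl
  | cons _ _ _ hl ih => exact (add_nonneg NNReal.zero_le_coe ih).trans hl

theorem mono (h : WalkWithin G w S x y l) (hS : S ⊆ S') (hl : l ≤ l') :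
    WalkWithin G w S' x y l' := by
  induction h generalizing l' with
  | nil h0 => exact .nil (h0.trans hl)
  | cons hx hxy _ hle ih => exact .cons (hS hx) hxy (ih le_rfl) (hle.trans hl)

theorem mono_set (h : WalkWithin G w S x y l) (hS : S ⊆ S') : WalkWithin G w S' x y l :=
  h.mono hS le_rfl

theorem mono_weight (h : WalkWithin G w S x y l) (hl : l ≤ l') : WalkWithin G w S x y l' :=
  h.mono subset_rfl hl

theorem trans (h : WalkWithin G w S x y l) (h' : WalkWithin G w S y z l') :
    WalkWithin G w S x z (l + l') := by
  induction h with
  | nil hl => exact h'.mono_weight (le_add_of_nonneg_left hl)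
  | cons hx hxy _ hle ih => exact .cons hx hxy (ih h') (by linarith)

theorem mem_left (h : WalkWithin G w S x y l) (hy : y ∈ S) : x ∈ S := by
  cases h with
  | nil => exact hy
  | cons hx => exact hx

theorem of_adj (hx : x ∈ S) (hxy : G.Adj x y) : WalkWithin G w S x y (w s(x, y)) :=
  .cons hx hxy (.nil le_rfl) (add_zero _).le

theorem symm (h : WalkWithin G w S x y l) (hy : y ∈ S) : WalkWithin G w S y x l := by
  induction h with
  | nil hl => exact .nil hl
  | cons _ hxy h hle ih =>
    refine ((ih hy).trans (.of_adj (h.mem_left hy) hxy.symm)).mono_weight ?_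
    rwa [Sym2.eq_swap, add_comm]

theorem exit {R : Set V} (h : WalkWithin G w S x z l) (hx : x ∈ R) (hz : z ∉ R) :
    ∃ p ∈ R, p ∈ S ∧ ∃ y ∉ R, G.Adj p y ∧ ∃ l₁ l₂,
      WalkWithin G w (S ∩ R) x y l₁ ∧ WalkWithin G w S y z l₂ ∧ l₁ + l₂ ≤ l := by
  induction h with
  | nil => exact absurd hx hz
  | @cons x y z l _ hxS hxy h hle ih =>
    by_cases hy : y ∈ R
    · obtain ⟨p, hp, hpS, q, hq, hpq, l₁, l₂, h₁, h₂, hl⟩ := ih hy hz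
      exact ⟨p, hp, hpS, q, hq, hpq, _, l₂, .cons ⟨hxS, hx⟩ hxy h₁ le_rfl, h₂, by linarith⟩
    · exact ⟨x, hx, hxS, y, hy, hxy, _, l, .of_adj ⟨hxS, hx⟩ hxy, h, hle⟩

theorem within_of_closed {R : Set V} (h : WalkWithin G w S x z l) (hx : x ∈ R)
    (hR : ∀ p ∈ R, ∀ y ∈ S, G.Adj p y → y ∈ R) (hz : z ∈ S) : WalkWithin G w R x z l := by
  induction h with
  | nil hl => exact .nil hl
  | cons _ hxy h hle ih => exact .cons hx hxy (ih (hR _ hx _ (h.mem_left hz) hxy) hz) hle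

theorem le_add_of_lipschitz {t : V → ℝ}
    (ht : ∀ u ∈ S, ∀ v ∈ S, G.Adj u v → t u ≤ w s(u, v) + t v)
    (h : WalkWithin G w S x y l) (hy : y ∈ S) : t x ≤ l + t y := by
  induction h with
  | nil hl => exact le_add_of_nonneg_left hl
  | cons hx hxy h hle ih => linarith [ht _ hx _ (h.mem_left hy) hxy, ih hy]

theorem within_ball {v : V} {a R : ℝ} (h : WalkWithin G w S x y l) (hv : WalkWithin G w S v x a)
    (hR : a + l ≤ R) : WalkWithin G w {u | WalkWithin G w S v u R} x y l := by
  induction h generalizing a with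
  | nil hl => exact .nil hl
  | @cons x y _ _ _ hx hxy h hle ih =>
    exact .cons (hv.mono_weight (by linarith [h.nonneg, (w s(x, y)).coe_nonneg])) hxy
      (ih (hv.trans (.of_adj hx hxy)) (by linarith)) hle

theorem reachable (h : WalkWithin G w S x y l) (hx : x ∈ S) (hy : y ∈ S) :
    (G.induce S).Reachable ⟨x, hx⟩ ⟨y, hy⟩ := by
  induction h with
  | nil => rfl
  | cons _ hxy h _ ih =>
    have hadj : (G.induce S).Adj ⟨_, hx⟩ ⟨_, h.mem_left hy⟩ := hxy
    exact hadj.reachable.trans (ih _ hy)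

end WalkWithin

theorem connected_induce_of_forall_walkWithin (hS : (G.induce S).Connected) (hSS' : S ⊆ S')
    (h : ∀ v ∈ S', ∃ s ∈ S, ∃ l, WalkWithin G w S' v s l) : (G.induce S').Connected := by
  obtain ⟨⟨s₀, hs₀⟩⟩ := hS.nonempty
  refine SimpleGraph.connected_iff_exists_forall_reachable _ |>.2
    ⟨⟨s₀, hSS' hs₀⟩, fun ⟨v, hv⟩ ↦ ?_⟩
  obtain ⟨s, hs, l, hvs⟩ := h v hv
  have hs₀s : (G.induce S').Reachable ⟨s₀, hSS' hs₀⟩ ⟨s, hSS' hs⟩ :=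
    (hS.preconnected ⟨s₀, hs₀⟩ ⟨s, hs⟩).map (SimpleGraph.induceHomOfLE G hSS').toHom
  exact hs₀s.trans (hvs.reachable hv _).symm

theorem connected_induce_of_walkWithin_to (hx : x ∈ S)
    (h : ∀ v ∈ S, ∃ l, WalkWithin G w S v x l) : (G.induce S).Connected :=
  connected_induce_of_forall_walkWithin (S := {x}) (by simp [SimpleGraph.connected_top])
    (Set.singleton_subset_iff.2 hx) fun v hv ↦ ⟨x, rfl, h v hv⟩

variable (G w S x) in
/-- The vertex set of the connected component of `x` in the subgraph of `G` induced on `S`.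
It does not depend on `w`, which only enters through `WalkWithin`. -/
def component : Set V := {v | v ∈ S ∧ ∃ l, WalkWithin G w S v x l}

theorem component_subset : component G w S x ⊆ S := fun _ hv ↦ hv.1

theorem mem_component_self (hx : x ∈ S) : x ∈ component G w S x := ⟨hx, 0, .nil le_rfl⟩

theorem mem_component_of_adj (hy : y ∈ component G w S x) (hz : z ∈ S) (hyz : G.Adj y z) :
    z ∈ component G w S x := by
  obtain ⟨-, l, h⟩ := hy
  exact ⟨hz, _, .cons hz hyz.symm h le_rfl⟩

theorem exists_walkWithin_component (hx : x ∈ S) (hy : y ∈ component G w S x) :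
    ∃ l, WalkWithin G w (component G w S x) y x l := by
  obtain ⟨-, l, h⟩ := id hy
  exact ⟨l, h.within_of_closed hy (fun _ hp _ ↦ mem_component_of_adj hp) hx⟩

theorem connected_induce_component (hx : x ∈ S) :
    (G.induce (component G w S x)).Connected :=
  connected_induce_of_walkWithin_to (mem_component_self hx) fun _ ↦ exists_walkWithin_component hx

end Walks

section ShortestWalks

variable {G : SimpleGraph V} {w : Sym2 V → ℝ≥0} {S B : Set V} {x y z b : V} {l : ℝ}

variable (G w S B x) in
/-- The distance from `x` to the set `B` along walks of `G` that stay in `S` until they reach `B`.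
It takes the junk value `0` when there is no such walk. -/
noncomputable def distTo : ℝ := sInf {l | ∃ b ∈ B, WalkWithin G w S x b l}

theorem distTo_le (hb : b ∈ B) (h : WalkWithin G w S x b l) : distTo G w S B x ≤ l :=
  csInf_le ⟨0, fun _ ⟨_, _, hl⟩ ↦ hl.nonneg⟩ ⟨b, hb, h⟩

theorem WalkWithin.exists_weight_mem_closure (h : WalkWithin G w S x y l) :
    ∃ m ∈ AddSubmonoid.closure (Set.range fun e ↦ (w e : ℝ)), m ≤ l ∧ WalkWithin G w S x y m := by
  induction h with
  | nil hl => exact ⟨0, zero_mem _, hl, .nil le_rfl⟩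
  | cons hx hxy _ hle ih =>
    obtain ⟨m, hm, hml, hwalk⟩ := ih
    exact ⟨_, add_mem (AddSubmonoid.subset_closure ⟨_, rfl⟩) hm, by linarith,
      .cons hx hxy hwalk le_rfl⟩

/- Infima of walk weights are attained because sums of elements of a finite set of nonnegative reals
are well-ordered. -/
theorem exists_walkWithin_distTo [Finite V] (hb : b ∈ B) (h : WalkWithin G w S x b l) :
    ∃ b ∈ B, WalkWithin G w S x b (distTo G w S B x) := by
  have hclosure : (AddSubmonoid.closure (Set.range fun e ↦ (w e : ℝ)) : Set ℝ).IsPWO :=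
    (Set.finite_range _).isPWO.addSubmonoid_closure
      (Set.forall_mem_range.2 fun e ↦ (w e).coe_nonneg)
  set weights := {m | m ∈ AddSubmonoid.closure (Set.range fun e ↦ (w e : ℝ)) ∧
    ∃ b ∈ B, WalkWithin G w S x b m}
  have hwf : weights.IsWF := (hclosure.mono fun _ hm ↦ hm.1).isWF
  obtain ⟨m₀, hm₀, -, hwalk₀⟩ := h.exists_weight_mem_closure
  have hne : weights.Nonempty := ⟨m₀, hm₀, b, hb, hwalk₀⟩
  obtain ⟨-, b', hb', hwalk⟩ := hwf.min_mem hne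
  have hleast : IsLeast {l | ∃ b ∈ B, WalkWithin G w S x b l} (hwf.min hne) := by
    refine ⟨⟨b', hb', hwalk⟩, fun l ⟨c, hc, hl⟩ ↦ ?_⟩
    obtain ⟨m, hm, hml, hcm⟩ := hl.exists_weight_mem_closure
    exact (hwf.min_le hne ⟨hm, c, hc, hcm⟩).trans hml
  exact ⟨b', hb', hwalk.mono_weight hleast.csInf_eq.ge⟩

theorem distTo_eq_zero_of_not_reach (h : ∀ b ∈ B, ∀ l, ¬ WalkWithin G w S x b l) :
    distTo G w S B x = 0 := by
  have : {l | ∃ b ∈ B, WalkWithin G w S x b l} = ∅ :=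
    Set.eq_empty_iff_forall_notMem.2 fun l ⟨b, hb, hl⟩ ↦ h b hb l hl
  rw [distTo, this, Real.sInf_empty]

theorem distTo_le_add_of_adj [Finite V] (hx : x ∈ S) (hy : y ∈ S) (hxy : G.Adj x y) :
    distTo G w S B x ≤ w s(x, y) + distTo G w S B y := by
  by_cases hreach : ∃ b ∈ B, ∃ l, WalkWithin G w S y b l
  · obtain ⟨b, hb, l, h⟩ := hreach
    obtain ⟨b', hb', h'⟩ := exists_walkWithin_distTo hb h
    exact distTo_le hb' (.cons hx hxy h' le_rfl)
  · push Not at hreach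
    have hx0 : distTo G w S B x = 0 := distTo_eq_zero_of_not_reach fun b hb l h ↦
      hreach b hb _ (.cons hy hxy.symm h le_rfl)
    have hy0 : distTo G w S B y = 0 := distTo_eq_zero_of_not_reach hreach
    simp [hx0, hy0]

theorem distTo_self (hx : x ∈ B) : distTo G w S B x = 0 :=
  le_antisymm (distTo_le hx (.nil le_rfl)) (Real.sInf_nonneg fun _ ⟨_, _, h⟩ ↦ h.nonneg)

theorem WalkWithin.exists_geodesic {d : V → ℝ}
    (hd : ∀ u ∈ S, ∀ v ∈ S, G.Adj u v → d u ≤ w s(u, v) + d v)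
    (h : WalkWithin G w S x z l) (hz : z ∈ S) (hl : l ≤ d x - d z) :
    ∃ P ⊆ S, x ∈ P ∧ z ∈ P ∧ (∀ y ∈ P, d y ≤ d x) ∧
      ∀ y ∈ P, ∀ y' ∈ P, WalkWithin G w P y y' |d y - d y'| := by
  induction h with
  | nil =>
    refine ⟨{_}, Set.singleton_subset_iff.2 hz, rfl, rfl, fun y hy ↦ (congrArg d hy).le, ?_⟩
    rintro _ rfl _ rfl
    exact .nil (abs_nonneg _)
  | @cons x y z l l' hx hxy h hle ih =>
    have hyS := h.mem_left hz
    have hdxy := hd x hx y hyS hxy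
    have hdyz := h.le_add_of_lipschitz hd hz
    have hw : w s(x, y) = d x - d y := by linarith
    obtain ⟨P, hPS, hyP, hzP, hmax, hgeo⟩ := ih hz (by linarith)
    have hPxP : P ⊆ insert x P := Set.subset_insert _ _
    have hfrom : ∀ v ∈ P, WalkWithin G w (insert x P) x v |d x - d v| := fun v hv ↦ by
      refine .cons (Set.mem_insert _ _) hxy ((hgeo y hyP v hv).mono_set hPxP) ?_
      have hxv : 0 ≤ d x - d v := by linarith [hmax v hv, (w s(x, y)).coe_nonneg]
      rw [abs_of_nonneg (sub_nonneg.2 (hmax v hv)), abs_of_nonneg hxv, hw]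
      linarith
    refine ⟨insert x P, Set.insert_subset hx hPS, Set.mem_insert _ _, hPxP hzP, ?_, ?_⟩
    · rintro v (rfl | hv)
      · exact le_rfl
      · linarith [hmax v hv, (w s(x, y)).coe_nonneg]
    · rintro u (rfl | hu) v (rfl | hv)
      · exact .nil (abs_nonneg _)
      · exact hfrom v hv
      · rw [abs_sub_comm]
        exact (hfrom u hu).symm (hPxP hu)
      · exact (hgeo u hu v hv).mono_set hPxP

theorem exists_geodesic_to [Finite V] (hB : B ⊆ S) (hb : b ∈ B) (h : WalkWithin G w S x b l) :
    ∃ P ⊆ S, x ∈ P ∧ (∃ z ∈ B, z ∈ P) ∧ ∀ y ∈ P, ∀ y' ∈ P,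
      WalkWithin G w P y y' |distTo G w S B y - distTo G w S B y'| := by
  obtain ⟨z, hz, hwalk⟩ := exists_walkWithin_distTo hb h
  obtain ⟨P, hPS, hxP, hzP, -, hgeo⟩ := hwalk.exists_geodesic
    (fun _ hu _ hv ↦ distTo_le_add_of_adj (B := B) hu hv) (hB hz)
    (by rw [distTo_self hz, sub_zero])
  exact ⟨P, hPS, hxP, ⟨z, hz, hzP⟩, hgeo⟩

end ShortestWalks

section Voronoi

variable {G : SimpleGraph V} {w : Sym2 V → ℝ≥0} {C : Set V} {L : ℕ → Set V} {x y b : V} {l : ℝ}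
  {j : ℕ}

variable (G w C L x) in
/-- The index of a site `L j` nearest to `x` along walks that stay in `C` until they reach a site.
Ties are broken by taking the least index, so that a shortest walk to the nearest site stays in the
Voronoi cell it starts from. -/
noncomputable def nearestSite : ℕ :=
  sInf {j | ∃ b ∈ L j, WalkWithin G w C x b (distTo G w C (⋃ i, L i) x)}

theorem exists_walkWithin_nearestSite [Finite V] (hb : b ∈ L j) (h : WalkWithin G w C x b l) :
    ∃ b ∈ L (nearestSite G w C L x), WalkWithin G w C x b (distTo G w C (⋃ i, L i) x) := by
  obtain ⟨b', hb', h'⟩ := exists_walkWithin_distTo (Set.mem_iUnion_of_mem j hb) h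
  obtain ⟨i, hi⟩ := Set.mem_iUnion.1 hb'
  exact Nat.sInf_mem (s := {j | ∃ b ∈ L j, WalkWithin G w C x b _}) ⟨i, b', hi, h'⟩

theorem nearestSite_le (hb : b ∈ L j) (h : WalkWithin G w C x b (distTo G w C (⋃ i, L i) x)) :
    nearestSite G w C L x ≤ j :=
  Nat.sInf_le ⟨b, hb, h⟩

theorem nearestSite_eq_of_shortest [Finite V] (hx : x ∈ C) (hxy : G.Adj x y)
    (hb : b ∈ L (nearestSite G w C L x)) (h : WalkWithin G w C y b l)
    (hl : w s(x, y) + l ≤ distTo G w C (⋃ i, L i) x) :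
    nearestSite G w C L y = nearestSite G w C L x ∧ l ≤ distTo G w C (⋃ i, L i) y := by
  obtain ⟨c, hc, hyc⟩ := exists_walkWithin_nearestSite hb h
  have hxc := WalkWithin.cons hx hxy hyc le_rfl
  have hdxy := distTo_le (Set.mem_iUnion_of_mem _ hc) hxc
  have hdy := distTo_le (Set.mem_iUnion_of_mem _ hb) h
  exact ⟨le_antisymm (nearestSite_le hb (h.mono_weight (by linarith)))
    (nearestSite_le hc (hxc.mono_weight (by linarith))), by linarith⟩

variable (G w C L) in
/-- The vertices of `C` that reach some site `L j` inside `C` by a walk of weight less than `γ`. -/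
def nearSites (γ : ℝ) : Set V :=
  {x | x ∈ C ∧ ∃ j, ∃ b ∈ L j, ∃ l < γ, WalkWithin G w C x b l}

theorem walkWithin_cell_of_shortest [Finite V] {γ : ℝ} (h : WalkWithin G w C x b l)
    (hb : b ∈ L (nearestSite G w C L x)) (hl : l ≤ distTo G w C (⋃ i, L i) x) (hγ : l < γ) :
    WalkWithin G w
      {v | v ∈ nearSites G w C L γ ∧ nearestSite G w C L v = nearestSite G w C L x} x b l := by
  induction h with
  | nil h0 => exact .nil h0
  | @cons x y b l l' hx hxy h hle ih =>
    have hxcell : x ∈ nearSites G w C L γ := ⟨hx, _, b, hb, _, hγ, .cons hx hxy h hle⟩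
    obtain ⟨heq, hly⟩ := nearestSite_eq_of_shortest hx hxy hb h (hle.trans hl)
    refine .cons ⟨hxcell, rfl⟩ hxy ?_ hle
    rw [← heq] at hb ⊢
    exact ih hb hly (by linarith [(w s(x, y)).coe_nonneg])

theorem exists_walkWithin_cell [Finite V] {γ : ℝ} (hx : x ∈ nearSites G w C L γ) :
    ∃ b ∈ L (nearestSite G w C L x), WalkWithin G w
      {v | v ∈ nearSites G w C L γ ∧ nearestSite G w C L v = nearestSite G w C L x} x b γ := by
  obtain ⟨-, j, b, hb, l, hl, h⟩ := hx
  obtain ⟨c, hc, hxc⟩ := exists_walkWithin_nearestSite hb h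
  have hlt := (distTo_le (Set.mem_iUnion_of_mem j hb) h).trans_lt hl
  exact ⟨c, hc, (walkWithin_cell_of_shortest hxc hc le_rfl hlt).mono_weight hlt.le⟩

end Voronoi

section ChordalOrders

variable {ι : Type*} [LinearOrder ι] {K : ι → Finset ι} {a b u v x z : ι}

/-- `K j` is the set of earlier neighbours of `j` for an elimination ordering of a chordal graph:
the earlier neighbours of each index are pairwise adjacent. -/
structure IsChordalOrder (K : ι → Finset ι) : Prop where
  lt_of_mem : ∀ {i j}, i ∈ K j → i < j
  mem_of_mem_of_lt : ∀ {i j m}, i ∈ K m → j ∈ K m → i < j → i ∈ K j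

/-- `b` is a descendant of `v`: it leads to `v` by repeatedly passing to an earlier neighbour. -/
def IsDescendant (K : ι → Finset ι) (b v : ι) : Prop :=
  Relation.ReflTransGen (fun i j ↦ j ∈ K i) b v

/-- The value `x` is reached from `v` in fewer than `n` jumps towards `x`, where a jump towards `x`
goes to the least earlier neighbour that is at least `x`. -/
inductive JumpReach (K : ι → Finset ι) : ℕ → ι → ι → Prop
  | refl {n : ℕ} {x : ι} : JumpReach K (n + 1) x x
  | jump {n : ℕ} {v z x : ι} (hz : IsLeast {z | z ∈ K v ∧ x ≤ z} z) (h : JumpReach K n z x) :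
      JumpReach K (n + 1) v x

theorem exists_isLeast_ge_mem (hu : u ∈ K v) (hxu : x ≤ u) :
    ∃ z, IsLeast {z | z ∈ K v ∧ x ≤ z} z := by
  have hne : {z ∈ K v | x ≤ z}.Nonempty := ⟨u, Finset.mem_filter.2 ⟨hu, hxu⟩⟩
  exact ⟨_, by simpa using Finset.isLeast_min' _ hne⟩

namespace IsChordalOrder

theorem le_of_isDescendant (hK : IsChordalOrder K) (h : IsDescendant K b v) : v ≤ b := by
  induction h with
  | refl => exact le_rfl
  | tail _ h ih => exact (hK.lt_of_mem h).le.trans ih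

theorem mem_of_isDescendant (hK : IsChordalOrder K) (h : IsDescendant K b v) (hz : z ∈ K b)
    (hzv : z < v) : z ∈ K v := by
  induction h using Relation.ReflTransGen.head_induction_on with
  | refl => exact hz
  | head h₁ h₂ ih =>
    exact ih (hK.mem_of_mem_of_lt hz h₁ (hzv.trans_le (hK.le_of_isDescendant h₂)))

theorem isDescendant_of_mem (hK : IsChordalOrder K) (h : IsDescendant K b v) (hz : z ∈ K b)
    (hvz : v ≤ z) : IsDescendant K z v := by
  induction h using Relation.ReflTransGen.head_induction_on with
  | refl => exact absurd (hK.lt_of_mem hz) hvz.not_gt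
  | @head a b h₁ h₂ ih =>
    rcases lt_trichotomy z b with hzb | rfl | hbz
    · exact ih (hK.mem_of_mem_of_lt hz h₁ hzb)
    · exact h₂
    · exact .head (hK.mem_of_mem_of_lt h₁ hz hbz) h₂

theorem isDescendant_of_isLeast (hK : IsChordalOrder K) (hz : IsLeast {z | z ∈ K v ∧ x ≤ z} z)
    (hu : u ∈ K v) (hxu : x ≤ u) : IsDescendant K u z := by
  rcases (hz.2 ⟨hu, hxu⟩).eq_or_lt with rfl | hlt
  · exact .refl
  · exact .single (hK.mem_of_mem_of_lt hz.1.1 hu hlt)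

end IsChordalOrder

/-- The number of earlier neighbours of `v` that are less than `x`. -/
def rankIn (K : ι → Finset ι) (v x : ι) : ℕ := #{y ∈ K v | y < x}

theorem rankIn_lt_card (hz : z ∈ K v) : rankIn K v z < #(K v) :=
  Finset.card_lt_card (Finset.filter_ssubset.2 ⟨z, hz, lt_irrefl z⟩)

theorem rankIn_strictMonoOn : StrictMonoOn (rankIn K v) (K v) := fun a ha b _ hab ↦ by
  refine Finset.card_lt_card (Finset.ssubset_iff_of_subset ?_ |>.2 ⟨a, ?_, ?_⟩)
  · exact Finset.monotone_filter_right _ fun y _ hy ↦ hy.trans hab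
  · exact Finset.mem_filter.2 ⟨ha, hab⟩
  · simp

theorem rankIn_eq_of_isLeast (hz : IsLeast {z | z ∈ K v ∧ x ≤ z} z) :
    rankIn K v x = rankIn K v z := by
  refine congrArg Finset.card (Finset.filter_congr fun y hy ↦
    ⟨fun h ↦ h.trans_le hz.1.2, fun h ↦ ?_⟩)
  by_contra! hxy
  exact h.not_ge (hz.2 ⟨hy, hxy⟩)

theorem IsChordalOrder.rankIn_le (hK : IsChordalOrder K) (hz : z ∈ K v) (hxz : x ≤ z) :
    rankIn K v x ≤ rankIn K z x := by
  refine Finset.card_le_card fun y hy ↦ ?_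
  rw [Finset.mem_filter] at hy ⊢
  exact ⟨hK.mem_of_mem_of_lt hy.1 hz (hy.2.trans_le hxz), hy.2⟩

theorem multichoose_succ_eq_add_sum (n k : ℕ) :
    (n + 1).multichoose k = 1 + ∑ i ∈ Finset.Icc 1 k, n.multichoose i := by
  induction k with
  | zero => simp
  | succ k ih =>
    rw [Nat.multichoose_succ_succ, ih, Finset.sum_Icc_succ_top (Nat.le_add_left 1 k), add_left_comm,
      add_comm (n.multichoose _)]

theorem sum_multichoose_sub_rankIn_le {d : ℕ} (hd : #(K v) ≤ d) (n k : ℕ) :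
    ∑ z ∈ K v with d ≤ rankIn K v z + k, n.multichoose (d - rankIn K v z) ≤
      ∑ i ∈ Finset.Icc 1 k, n.multichoose i := by
  have hlt : ∀ z ∈ K v, rankIn K v z < d := fun z hz ↦ (rankIn_lt_card hz).trans_le hd
  have hinj : Set.InjOn (fun z ↦ d - rankIn K v z)
      ({z ∈ K v | d ≤ rankIn K v z + k} : Finset ι) := fun a ha b hb hab ↦ by
    have ha' := (Finset.mem_filter.1 ha).1
    have hb' := (Finset.mem_filter.1 hb).1
    refine rankIn_strictMonoOn.injOn ha' hb' ?_
    have := hlt a ha'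
    have := hlt b hb'
    simp only at hab
    omega
  rw [← Finset.sum_image (f := n.multichoose) hinj]
  refine Finset.sum_le_sum_of_subset (Finset.image_subset_iff.2 fun z hz ↦ ?_)
  obtain ⟨hzv, hz⟩ := Finset.mem_filter.1 hz
  have := hlt z hzv
  rw [Finset.mem_Icc]
  omega

theorem IsChordalOrder.exists_finset_jumpReach (hK : IsChordalOrder K) {d : ℕ}
    (hd : ∀ j, #(K j) ≤ d) (n k : ℕ) (v : ι) :
    ∃ F : Finset ι, (∀ x, JumpReach K n v x → d ≤ rankIn K v x + k → x ∈ F) ∧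
      #F ≤ n.multichoose k := by
  induction n generalizing k v with
  | zero => exact ⟨∅, fun x h ↦ (nomatch h), by simp⟩
  | succ n ih =>
    choose F hF hcard using fun z ↦ ih (d - rankIn K v z) z
    refine ⟨insert v ({z ∈ K v | d ≤ rankIn K v z + k}.biUnion F), fun x h hx ↦ ?_, ?_⟩
    · cases h with
      | refl => exact Finset.mem_insert_self _ _
      | @jump _ _ z _ hz h =>
        obtain ⟨⟨hzv, hxz⟩, -⟩ := id hz
        have hrank := rankIn_eq_of_isLeast hz
        refine Finset.mem_insert_of_mem (Finset.mem_biUnion.2 ⟨z, ?_, hF z x h ?_⟩)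
        · exact Finset.mem_filter.2 ⟨hzv, hrank ▸ hx⟩
        · have := hK.rankIn_le hzv hxz
          omega
    · calc #(insert v ({z ∈ K v | d ≤ rankIn K v z + k}.biUnion F))
          ≤ 1 + ∑ z ∈ K v with d ≤ rankIn K v z + k, n.multichoose (d - rankIn K v z) := by
            rw [add_comm]
            refine (Finset.card_insert_le _ _).trans (Nat.add_le_add_right ?_ 1)
            exact Finset.card_biUnion_le.trans (Finset.sum_le_sum fun z _ ↦ hcard z)
        _ ≤ 1 + ∑ i ∈ Finset.Icc 1 k, n.multichoose i :=
            Nat.add_le_add_left (sum_multichoose_sub_rankIn_le (hd v) n k) 1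
        _ = (n + 1).multichoose k := (multichoose_succ_eq_add_sum n k).symm

end ChordalOrders

section Skeletons

/-- A family of geodesics `path x` indexed by finitely many terminals `x`, all of them parametrized
by the same potential `depth`; in use, they are branches of one shortest-path tree. -/
structure Skeleton (V : Type) where
  terminals : Finset V
  path : V → Set V
  depth : V → ℝ

namespace Skeleton

variable {G : SimpleGraph V} {w : Sym2 V → ℝ≥0} {sk : Skeleton V} {X X' D D' : Set V} {ρ ρ' : ℝ}
  {a b : V}

/-- The branches of `sk` lie in `X` and are geodesic: walks in `X` realize the difference of depths
along a branch, and no walk in `D` is shorter, since `depth` is `1`-Lipschitz on `D`. -/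
structure IsTight (sk : Skeleton V) (G : SimpleGraph V) (w : Sym2 V → ℝ≥0) (X D : Set V) :
    Prop where
  path_subset : ∀ x ∈ sk.terminals, sk.path x ⊆ X
  walkWithin_path : ∀ x ∈ sk.terminals, ∀ y ∈ sk.path x, ∀ y' ∈ sk.path x,
    WalkWithin G w X y y' |sk.depth y - sk.depth y'|
  depth_le : ∀ u ∈ D, ∀ v ∈ D, G.Adj u v → sk.depth u ≤ w s(u, v) + sk.depth v

theorem IsTight.mono (h : sk.IsTight G w X D) (hX : X ⊆ X') (hD : D' ⊆ D) :
    sk.IsTight G w X' D' where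
  path_subset x hx := (h.path_subset x hx).trans hX
  walkWithin_path x hx y hy y' hy' := (h.walkWithin_path x hx y hy y' hy').mono_set hX
  depth_le u hu v hv := h.depth_le u (hD hu) v (hD hv)

/-- The vertex `a` is joined to some branch of `sk` by a walk in `X` of weight at most `ρ`. -/
def IsNear (sk : Skeleton V) (G : SimpleGraph V) (w : Sym2 V → ℝ≥0) (X : Set V) (ρ : ℝ) (a : V) :
    Prop :=
  ∃ x ∈ sk.terminals, ∃ s ∈ sk.path x, WalkWithin G w X a s ρ

theorem IsNear.mono (h : sk.IsNear G w X ρ a) (hX : X ⊆ X') (hρ : ρ ≤ ρ') :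
    sk.IsNear G w X' ρ' a := by
  obtain ⟨x, hx, s, hs, h⟩ := h
  exact ⟨x, hx, s, hs, h.mono hX hρ⟩

theorem IsNear.of_walkWithin (h : sk.IsNear G w X ρ b) (hab : WalkWithin G w X a b ρ') :
    sk.IsNear G w X (ρ' + ρ) a := by
  obtain ⟨x, hx, s, hs, h⟩ := h
  exact ⟨x, hx, s, hs, hab.trans h⟩

/-- The union of the branches of a skeleton. -/
def support (sk : Skeleton V) : Set V := {v | ∃ x ∈ sk.terminals, v ∈ sk.path x}

theorem exists_isTight_support [Finite V] {S : Set V} {T : Finset V} {u : V} (hu : u ∈ S)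
    (huT : u ∈ T) (hT : (T : Set V) ⊆ component G w S u) :
    ∃ sk : Skeleton V, sk.terminals = T ∧ (T : Set V) ⊆ sk.support ∧
      sk.support ⊆ component G w S u ∧ (G.induce sk.support).Connected ∧
      sk.IsTight G w sk.support S := by
  have : Nonempty V := ⟨u⟩
  have hgeo : ∀ x ∈ T, _ := fun x hx ↦
    exists_geodesic_to (Set.singleton_subset_iff.2 hu) rfl (hT hx).2.choose_spec
  choose! P hPS hxP hPu hPgeo using hgeo
  let sk : Skeleton V := ⟨T, P, distTo G w S {u}⟩
  have hPsub : ∀ x ∈ T, P x ⊆ sk.support := fun x hx v hv ↦ ⟨x, hx, hv⟩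
  have hwalk : ∀ x ∈ T, ∀ v ∈ P x, ∃ l, WalkWithin G w (P x) v u l := fun x hx v hv ↦ by
    obtain ⟨z, rfl, hz⟩ := hPu x hx
    exact ⟨_, hPgeo x hx v hv z hz⟩
  have hTsub : (T : Set V) ⊆ sk.support := fun x hx ↦ hPsub x hx (hxP x hx)
  refine ⟨sk, rfl, hTsub, ?_, connected_induce_of_walkWithin_to (w := w) (hTsub huT) ?_, hPsub,
    fun x hx y hy y' hy' ↦ (hPgeo x hx y hy y' hy').mono_set (hPsub x hx),
    fun y hy y' hy' hadj ↦ distTo_le_add_of_adj hy hy' hadj⟩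
  · rintro v ⟨x, hx, hv⟩
    obtain ⟨l, hl⟩ := hwalk x hx v hv
    exact ⟨hPS x hx hv, l, hl.mono_set (hPS x hx)⟩
  · rintro v ⟨x, hx, hv⟩
    obtain ⟨l, hl⟩ := hwalk x hx v hv
    exact ⟨l, hl.mono_set (hPsub x hx)⟩

end Skeleton

end Skeletons

section BufferedCopDecompositions

variable {ι : Type*} [LinearOrder ι] {G : SimpleGraph V} {w : Sym2 V → ℝ≥0} {γ : ℝ} {d : ℕ}
  {f : V → ι} {K : ι → Finset ι} {sk : ι → Skeleton V} {u v x y : V} {i : ι} {l : ℝ}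

/-- A `γ`-buffered cop decomposition of width `d`. The fibres of `f` are the supernodes, listed in
the order in which they are created, and `K j` is the set of earlier supernodes adjacent to the
domain of the supernode `j` at its creation. Each supernode is within `γ * d` of a geodesic
skeleton, and it is `γ`-separated from every later domain to which it is not adjacent. -/
structure IsBufferedCopDecomp (G : SimpleGraph V) (w : Sym2 V → ℝ≥0) (γ : ℝ) (d : ℕ) (f : V → ι)
    (K : ι → Finset ι) (sk : ι → Skeleton V) : Prop where
  chordal : IsChordalOrder K
  mem_of_adj : ∀ {u v}, G.Adj u v → f u < f v → f u ∈ K (f v)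
  card_le : ∀ j, #(K j) ≤ d
  buffer : ∀ {x z l}, f z < f x → f z ∉ K (f x) → WalkWithin G w {v | f z ≤ f v} x z l → γ ≤ l
  tight : ∀ j, (sk j).IsTight G w {v | f v = j} {v | j ≤ f v}
  card_terminals_le : ∀ j, #(sk j).terminals ≤ d
  near : ∀ a, (sk (f a)).IsNear G w {v | f v = f a} (γ * d) a

namespace IsBufferedCopDecomp

theorem mem_of_adj_of_not_isDescendant (hf : IsBufferedCopDecomp G w γ d f K sk)
    (hu : IsDescendant K (f u) i) (huv : G.Adj u v) (hv : ¬ IsDescendant K (f v) i) :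
    f v ∈ K i ∧ f v < i := by
  rcases lt_trichotomy (f v) (f u) with hlt | heq | hgt
  · have hmem := hf.mem_of_adj huv.symm hlt
    have hvi : f v < i := by
      by_contra! hle
      exact hv (hf.chordal.isDescendant_of_mem hu hmem hle)
    exact ⟨hf.chordal.mem_of_isDescendant hu hmem hvi, hvi⟩
  · exact absurd (heq ▸ hu) hv
  · exact absurd (.head (hf.mem_of_adj huv hgt) hu) hv

theorem exists_jump (hf : IsBufferedCopDecomp G w γ d f K sk)
    (h : WalkWithin G w {v | f y ≤ f v} x y l) (hx : IsDescendant K (f x) i) (hy : f y < i) :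
    ∃ j, IsLeast {j | j ∈ K i ∧ f y ≤ j} j ∧ ∃ z, IsDescendant K (f z) j ∧ f z ∈ K i ∧
      f y ≤ f z ∧ ∃ l₁ l₂, WalkWithin G w {v | i ≤ f v} x z l₁ ∧
        WalkWithin G w {v | f y ≤ f v} z y l₂ ∧ l₁ + l₂ ≤ l := by
  obtain ⟨p, hp, -, z, hz, hpz, l₁, l₂, h₁, h₂, hl⟩ :=
    h.exit (R := {v | IsDescendant K (f v) i}) hx
      (fun hyi ↦ hy.not_ge (hf.chordal.le_of_isDescendant hyi))
  obtain ⟨hzi, -⟩ := hf.mem_of_adj_of_not_isDescendant hp hpz hz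
  have hyz : f y ≤ f z := h₂.mem_left le_rfl
  obtain ⟨j, hj⟩ := exists_isLeast_ge_mem hzi hyz
  exact ⟨j, hj, z, hf.chordal.isDescendant_of_isLeast hj hzi hyz, hzi, hyz, l₁, l₂,
    h₁.mono_set fun v hv ↦ hf.chordal.le_of_isDescendant hv.2, h₂, hl⟩

/- A walk making two consecutive jumps crosses a buffer: it gets from a descendant of `i` to a
supernode outside `K i`. -/
theorem jumpReach (hf : IsBufferedCopDecomp G w γ d f K sk) {m : ℕ}
    (h : WalkWithin G w {v | f y ≤ f v} x y l) (hx : IsDescendant K (f x) i) (hy : f y ≤ i)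
    (hl : l < m * γ) : JumpReach K (2 * m) i (f y) := by
  induction m generalizing i x l with
  | zero =>
    rw [Nat.cast_zero, zero_mul] at hl
    exact absurd h.nonneg hl.not_ge
  | succ m ih =>
    rcases hy.eq_or_lt with rfl | hyi
    · exact .refl
    obtain ⟨j, hj, z, hzj, -, -, l₁, l₂, h₁, h₂, hle⟩ := hf.exists_jump h hx hyi
    refine .jump hj ?_
    have hji := hf.chordal.lt_of_mem hj.1.1
    rcases hj.1.2.eq_or_lt with rfl | hyj
    · exact .refl
    obtain ⟨k, hk, u, huk, huj, hyu, l₃, l₄, h₃, h₄, hle'⟩ := hf.exists_jump h₂ hzj hyj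
    refine .jump hk (ih h₄ huk hk.1.2 ?_)
    have hu : f u < j := hf.chordal.lt_of_mem huj
    have hui : f u ∉ K i := fun hui ↦ hu.not_ge (hj.2 ⟨hui, hyu⟩)
    have hux : f u ∉ K (f x) := fun hux ↦
      hui (hf.chordal.mem_of_isDescendant hx hux (hu.trans hji))
    have hxu : f u < f x := (hu.trans hji).trans_le (hf.chordal.le_of_isDescendant hx)
    have hbuffer : γ ≤ l₁ + l₃ := hf.buffer hxu hux
      ((h₁.mono_set fun v hv ↦ (hu.trans hji).le.trans hv).trans
        (h₃.mono_set fun v hv ↦ hu.le.trans hv))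
    push_cast at hl
    linarith

end IsBufferedCopDecomp

theorem exists_net (P : Set V) (t : V → ℝ) {δ : ℝ} (hδ : 0 < δ) :
    ∃ N ⊆ P, (∀ s ∈ P, ∃ y ∈ N, |t s - t y| ≤ δ) ∧
      ∀ a L, 0 ≤ L → {y ∈ N | |t y - a| ≤ L}.ncard ≤ ⌊2 * L / δ + 2⌋₊ := by
  obtain ⟨N, hN, hbij⟩ :=
    Set.exists_subset_bijOn P (fun y ↦ ⌊t y / δ⌋)
  refine ⟨N, hN, fun s hs ↦ ?_, fun a L hL ↦ Nat.le_floor ?_⟩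
  · obtain ⟨y, hy, hfloor⟩ := hbij.surjOn (Set.mem_image_of_mem _ hs)
    have := Int.abs_sub_lt_one_of_floor_eq_floor hfloor.symm
    rw [← sub_div, abs_div, abs_of_pos hδ, div_lt_one hδ] at this
    exact ⟨y, hy, this.le⟩
  · have hmaps : ∀ y ∈ {y ∈ N | |t y - a| ≤ L},
        ⌊t y / δ⌋ ∈ (Finset.Icc ⌊(a - L) / δ⌋ ⌊(a + L) / δ⌋ : Set ℤ) := fun y ⟨_, hy⟩ ↦ by
      rw [abs_le] at hy
      rw [Finset.mem_coe, Finset.mem_Icc]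
      exact ⟨by gcongr; linarith, by gcongr; linarith⟩
    have hcard := Set.ncard_le_ncard_of_injOn _ hmaps (hbij.injOn.mono fun _ hy ↦ hy.1)
    rw [Set.ncard_coe_finset, Int.card_Icc] at hcard
    have hlen : (⌊(a + L) / δ⌋ + 1 - ⌊(a - L) / δ⌋ : ℝ) ≤ 2 * L / δ + 2 := by
      have := Int.floor_le ((a + L) / δ)
      have := Int.lt_floor_add_one ((a - L) / δ)
      have : 2 * L / δ = (a + L) / δ - (a - L) / δ := by ring
      linarith
    refine (Nat.cast_le.2 hcard).trans ?_
    rw [← Int.cast_natCast, Int.toNat_eq_max, Int.cast_max]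
    push_cast
    exact max_le hlen (by positivity)

/-- The vertices joined to `y` by a walk of weight at most `L` that stays in the supernodes not
created before that of `y`. -/
def cluster (G : SimpleGraph V) (w : Sym2 V → ℝ≥0) (f : V → ι) (L : ℝ) (y : V) : Set V :=
  {u | WalkWithin G w {v | f y ≤ f v} u y L}

theorem walkWithin_of_mem_cluster {L : ℝ} (hu : u ∈ cluster G w f L y)
    (hv : v ∈ cluster G w f L y) : WalkWithin G w Set.univ u v (2 * L) := by
  rw [two_mul]
  exact (hu.trans (hv.symm (le_refl (f y)))).mono_set (Set.subset_univ _)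

theorem exists_ball_subset_cluster [Finite V] (v : V) (R : ℝ) (hR : 0 ≤ R) :
    ∃ x, ∀ ρ y, f y = f x → WalkWithin G w {v | f x ≤ f v} x y ρ →
      {u | WalkWithin G w Set.univ v u R} ⊆ cluster G w f (2 * R + ρ) y := by
  have hv : WalkWithin G w Set.univ v v 0 := .nil le_rfl
  obtain ⟨x, hx, hmin⟩ := Set.exists_min_image {u | WalkWithin G w Set.univ v u R} f
    (Set.toFinite _) ⟨v, hv.mono_weight hR⟩
  refine ⟨x, fun ρ y hyx hxy u hu ↦ ?_⟩
  have hball : ∀ z ∈ {u | WalkWithin G w Set.univ v u R}, WalkWithin G w {v | f x ≤ f v} v z R :=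
    fun z hz ↦ (WalkWithin.within_ball hz hv (zero_add R).le).mono_set hmin
  rw [cluster, hyx, two_mul]
  exact (((hball u hu).symm (hmin u hu)).trans (hball x hx)).trans hxy

theorem IsBufferedCopDecomp.abs_depth_sub_le (hf : IsBufferedCopDecomp G w γ d f K sk) {L : ℝ}
    (hu : u ∈ cluster G w f L y) : |(sk (f y)).depth y - (sk (f y)).depth u| ≤ L := by
  have hlip := (hf.tight (f y)).depth_le
  have hyy : y ∈ {v | f y ≤ f v} := le_refl (f y)
  have := hu.le_add_of_lipschitz hlip hyy
  have := (hu.symm hyy).le_add_of_lipschitz hlip (hu.mem_left hyy)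
  exact abs_le.2 ⟨by linarith, by linarith⟩

theorem IsBufferedCopDecomp.ncard_clusters_le [Finite V]
    (hf : IsBufferedCopDecomp G w γ d f K sk) {L : ℝ} {m c : ℕ} (hL : L < m * γ)
    {N : ι → V → Set V}
    (hN : ∀ j x a, {y ∈ N j x | |(sk j).depth y - a| ≤ L}.ncard ≤ c) (u : V) :
    {A | A ∈ cluster G w f L '' {y | ∃ x ∈ (sk (f y)).terminals, y ∈ N (f y) x} ∧ u ∈ A}.ncard ≤
      (2 * m).multichoose d * (d * c) := by
  classical
  obtain ⟨F, hF, hcard⟩ := hf.chordal.exists_finset_jumpReach hf.card_le (2 * m) d (f u)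
  let centers : Finset V := F.biUnion fun j ↦ (sk j).terminals.biUnion fun x ↦
    (Set.toFinite {y ∈ N j x | |(sk j).depth y - (sk j).depth u| ≤ L}).toFinset
  have hsub : {A | A ∈ cluster G w f L '' {y | ∃ x ∈ (sk (f y)).terminals, y ∈ N (f y) x} ∧
      u ∈ A} ⊆ cluster G w f L '' centers := by
    rintro _ ⟨⟨y, ⟨x, hx, hy⟩, rfl⟩, hu⟩
    refine Set.mem_image_of_mem _ (Finset.mem_biUnion.2 ⟨f y, ?_, Finset.mem_biUnion.2 ⟨x, hx, ?_⟩⟩)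
    · exact hF _ (hf.jumpReach hu .refl (hu.mem_left (le_refl (f y))) hL) (Nat.le_add_left _ _)
    · exact (Set.Finite.mem_toFinset _).2 ⟨hy, hf.abs_depth_sub_le hu⟩
  calc _ ≤ (cluster G w f L '' centers).ncard := Set.ncard_le_ncard hsub
    _ ≤ #centers := (Set.ncard_image_le).trans (Set.ncard_coe_finset _).le
    _ ≤ #F * (d * c) := Finset.card_biUnion_le_card_mul _ _ _ fun j _ ↦
        (Finset.card_biUnion_le_card_mul _ _ c fun x _ ↦
          (Set.ncard_eq_toFinset_card _).symm.trans_le (hN j x _)).trans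
            (Nat.mul_le_mul_right c (hf.card_terminals_le j))
    _ ≤ (2 * m).multichoose d * (d * c) := Nat.mul_le_mul_right _ hcard

theorem IsBufferedCopDecomp.exists_cover [Finite V] (hf : IsBufferedCopDecomp G w γ d f K sk)
    {R δ : ℝ} {m : ℕ} (hR : 0 ≤ R) (hδ : 0 < δ) (hm : 2 * R + (γ * d + δ) < m * γ) :
    ∃ 𝒟 : Set (Set V), (∀ v, ∃ A ∈ 𝒟, ∀ u, WalkWithin G w Set.univ v u R → u ∈ A) ∧
      (∀ A ∈ 𝒟, ∀ u ∈ A, ∀ v ∈ A,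
        WalkWithin G w Set.univ u v (2 * (2 * R + (γ * d + δ)))) ∧
      ∀ v, {A | A ∈ 𝒟 ∧ v ∈ A}.ncard ≤
        (2 * m).multichoose d * (d * ⌊2 * (2 * R + (γ * d + δ)) / δ + 2⌋₊) := by
  choose N hN hnet hcard using fun j x ↦ exists_net ((sk j).path x) (sk j).depth hδ
  refine ⟨cluster G w f _ '' {y | ∃ x ∈ (sk (f y)).terminals, y ∈ N (f y) x}, fun v ↦ ?_, ?_,
    fun v ↦ hf.ncard_clusters_le hm (fun j x a ↦ hcard j x a _ ?_) v⟩
  · obtain ⟨x, hx⟩ := exists_ball_subset_cluster (G := G) (w := w) (f := f) v R hR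
    obtain ⟨a, ha, s, hs, hxs⟩ := hf.near x
    obtain ⟨y, hy, hsy⟩ := hnet (f x) a s hs
    have hyx : f y = f x := (hf.tight (f x)).path_subset a ha (hN _ _ hy)
    have hwalk := (hxs.trans ((hf.tight (f x)).walkWithin_path a ha s hs y (hN _ _ hy))).mono
      (fun v hv ↦ hv.ge) (add_le_add_right hsy _)
    exact ⟨_, ⟨y, ⟨a, by rwa [hyx], by rwa [hyx]⟩, rfl⟩, hx _ y hyx hwalk⟩
  · rintro _ ⟨y, -, rfl⟩ u hu v hv
    exact walkWithin_of_mem_cluster hu hv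
  · obtain ⟨-, -, s, -, hvs⟩ := hf.near v
    have := hvs.nonneg
    positivity

end BufferedCopDecompositions

section PartialDecompositions

/-- A state of the construction of a buffered cop decomposition. The vertex `v` is in the supernode
`j` if `label v = some j` and is still free if `label v = none`; the labels in use are those below
`next`. The set `seen v` consists of the supernodes to which the component of a free vertex `v` in
the free part is considered adjacent. The supernode `j` was created in a component that saw the
supernodes in `back j`, around the skeleton `skel j`. -/
structure PartialDecomp (V : Type) where
  label : V → Option ℕ
  next : ℕ
  back : ℕ → Finset ℕ
  seen : V → Finset ℕ
  skel : ℕ → Skeleton V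

namespace PartialDecomp

variable {σ τ : PartialDecomp V} {G : SimpleGraph V} {w : Sym2 V → ℝ≥0} {γ : ℝ} {d : ℕ}
  {s : Finset ℕ} {C : Set V} {i j : ℕ} {u v : V}

/-- The vertices not yet in any supernode. -/
def free (σ : PartialDecomp V) : Set V := {v | σ.label v = none}

/-- The supernode with label `j`. -/
def part (σ : PartialDecomp V) (j : ℕ) : Set V := {v | σ.label v = some j}

/-- The vertices outside the supernodes with label less than `j`. -/
def domain (σ : PartialDecomp V) (j : ℕ) : Set V := {v | ∀ i ∈ σ.label v, j ≤ i}

/-- The vertices that belong to the supernode `j` or may still join it. -/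
def territory (σ : PartialDecomp V) (j : ℕ) : Set V :=
  {v | v ∈ σ.part j ∨ v ∈ σ.free ∧ j ∈ σ.seen v}

/-- The vertex `v` has distance at least `γ` in the domain of `i` from everything that belongs to
the supernode `i` or may still join it. -/
def IsBufferedFrom (σ : PartialDecomp V) (G : SimpleGraph V) (w : Sym2 V → ℝ≥0) (γ : ℝ) (i : ℕ)
    (v : V) : Prop :=
  ∀ z ∈ σ.territory i, ∀ l, WalkWithin G w (σ.domain i) v z l → γ ≤ l

theorem notMem_free_of_mem_part (hv : v ∈ σ.part j) : v ∉ σ.free := fun h ↦ by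
  simp_all [free, part]

theorem exists_mem_part_of_notMem_free (hv : v ∉ σ.free) : ∃ j, v ∈ σ.part j :=
  Option.ne_none_iff_exists'.1 hv

theorem eq_of_mem_part (hi : v ∈ σ.part i) (hj : v ∈ σ.part j) : i = j :=
  Option.some_injective _ (hi.symm.trans hj)

theorem free_subset_domain : σ.free ⊆ σ.domain j := fun v hv ↦ by simp_all [free, domain]

theorem mem_domain_iff_of_mem_part (hv : v ∈ σ.part i) : v ∈ σ.domain j ↔ j ≤ i := by
  simp_all [part, domain]

theorem territory_subset_domain : σ.territory j ⊆ σ.domain j := by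
  rintro v (hv | ⟨hv, -⟩)
  · exact (mem_domain_iff_of_mem_part hv).2 le_rfl
  · exact free_subset_domain hv

/-- The combinatorial invariants of the construction: `back` records the adjacencies between
supernodes, and `seen` is constant on the components of the free part and contains the adjacent
supernodes. -/
structure IsLegal (σ : PartialDecomp V) (G : SimpleGraph V) (d : ℕ) : Prop where
  lt_next : ∀ {v j}, v ∈ σ.part j → j < σ.next
  lt_next_of_mem_seen : ∀ {v j}, j ∈ σ.seen v → j < σ.next
  chordal : IsChordalOrder σ.back
  mem_back_of_mem_seen : ∀ {v i j}, i ∈ σ.seen v → j ∈ σ.seen v → i < j → i ∈ σ.back j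
  seen_eq_of_adj : ∀ {u v}, u ∈ σ.free → v ∈ σ.free → G.Adj u v → σ.seen u = σ.seen v
  mem_seen_of_adj : ∀ {u v j}, u ∈ σ.free → v ∈ σ.part j → G.Adj u v → j ∈ σ.seen u
  mem_back_of_adj : ∀ {u v i j}, u ∈ σ.part i → v ∈ σ.part j → i < j → G.Adj u v → i ∈ σ.back j
  exists_adj : ∀ {i j}, i ∈ σ.back j → ∃ u ∈ σ.part i, ∃ v ∈ σ.part j, G.Adj u v
  card_back_le : ∀ j, #(σ.back j) ≤ d
  connected : ∀ {j}, j < σ.next → (G.induce (σ.part j)).Connected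

/-- The metric invariants of the construction. In `near`, the set `s` consists of supernodes to
which the vertex `a` lost adjacency before it joined the supernode `j`; each of them accounts for
one step of length `γ` away from the skeleton. -/
structure IsBuffered (σ : PartialDecomp V) (G : SimpleGraph V) (w : Sym2 V → ℝ≥0) (γ : ℝ) (d : ℕ) :
    Prop where
  buffer_free : ∀ {v i}, v ∈ σ.free → i < σ.next → i ∉ σ.seen v → σ.IsBufferedFrom G w γ i v
  buffer_part : ∀ {v i j}, v ∈ σ.part j → i < j → i ∉ σ.back j → σ.IsBufferedFrom G w γ i v
  tight : ∀ j, (σ.skel j).IsTight G w (σ.part j) (σ.domain j)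
  card_terminals_le : ∀ j, #(σ.skel j).terminals ≤ d
  near : ∀ {a j}, a ∈ σ.part j → ∃ s ⊆ σ.back j,
    (∀ u ∈ σ.free, G.Adj u a → Disjoint s (σ.seen u)) ∧
      (σ.skel j).IsNear G w (σ.part j) (γ * #s) a

theorem IsLegal.lt_next_of_mem_back (hσ : σ.IsLegal G d) (h : i ∈ σ.back j) : j < σ.next := by
  obtain ⟨-, -, v, hv, -⟩ := hσ.exists_adj h
  exact hσ.lt_next hv

/-- The state `τ` arises from `σ` by letting free vertices join supernodes, where only vertices that
were eligible have joined the supernodes of `σ`, and no vertex has become newly eligible. -/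
structure Extends (σ τ : PartialDecomp V) : Prop where
  part_subset : ∀ j, σ.part j ⊆ τ.part j
  territory_subset : ∀ j < σ.next, τ.territory j ⊆ σ.territory j

theorem Extends.domain_subset (h : Extends σ τ) : τ.domain j ⊆ σ.domain j :=
  fun _ hv _ hi ↦ hv _ (h.part_subset _ hi)

theorem IsBufferedFrom.of_extends (hv : σ.IsBufferedFrom G w γ i v) (h : Extends σ τ)
    (hi : i < σ.next) : τ.IsBufferedFrom G w γ i v :=
  fun z hz l hl ↦ hv z (h.territory_subset i hi hz) l (hl.mono_set h.domain_subset)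

/-- A set of free vertices that is a union of components of the free part, all of which see the
supernodes in `s`. -/
structure IsFreePiece (σ : PartialDecomp V) (G : SimpleGraph V) (C : Set V) (s : Finset ℕ) :
    Prop where
  subset_free : C ⊆ σ.free
  mem_of_adj : ∀ {u v}, u ∈ C → v ∈ σ.free → G.Adj u v → v ∈ C
  seen_eq : ∀ {v}, v ∈ C → σ.seen v = s

theorem IsFreePiece.mem_iff_of_adj (hC : σ.IsFreePiece G C s) (hu : u ∈ σ.free) (hv : v ∈ σ.free)
    (huv : G.Adj u v) : u ∈ C ↔ v ∈ C :=
  ⟨fun h ↦ hC.mem_of_adj h hv huv, fun h ↦ hC.mem_of_adj h hu huv.symm⟩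

theorem IsFreePiece.mem_of_mem_part (hC : σ.IsFreePiece G C s) (hσ : σ.IsLegal G d) (hu : u ∈ C)
    (hv : v ∈ σ.part j) (huv : G.Adj u v) : j ∈ s :=
  hC.seen_eq hu ▸ hσ.mem_seen_of_adj (hC.subset_free hu) hv huv

theorem IsLegal.seen_eq_of_walkWithin (hσ : σ.IsLegal G d) {l : ℝ}
    (h : WalkWithin G w σ.free u v l) (hv : v ∈ σ.free) : σ.seen u = σ.seen v := by
  induction h with
  | nil => rfl
  | cons hx hxy h _ ih => exact (hσ.seen_eq_of_adj hx (h.mem_left hv) hxy).trans (ih hv)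

theorem IsLegal.isFreePiece_component (hσ : σ.IsLegal G d) (hu : u ∈ σ.free) :
    σ.IsFreePiece G (component G w σ.free u) (σ.seen u) where
  subset_free := component_subset
  mem_of_adj hv hz hvz := mem_component_of_adj hv hz hvz
  seen_eq hv := by
    obtain ⟨-, l, h⟩ := hv
    exact hσ.seen_eq_of_walkWithin h hu

end PartialDecomp

end PartialDecompositions

section Detaching

namespace PartialDecomp

variable {σ : PartialDecomp V} {G : SimpleGraph V} {w : Sym2 V → ℝ≥0} {γ : ℝ} {d : ℕ}
  {s : Finset ℕ} {C : Set V} {Y i j : ℕ} {u v x : V}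

/-- The vertices of the supernode `j` that are adjacent to `C`, provided that `j` was created after
`Y`. -/
def contacts (σ : PartialDecomp V) (G : SimpleGraph V) (C : Set V) (Y j : ℕ) : Set V :=
  {b | b ∈ σ.part j ∧ Y < j ∧ ∃ p ∈ C, G.Adj p b}

/-- The vertices of `C` at distance less than `γ` from the contacts of `C`. -/
def collar (σ : PartialDecomp V) (G : SimpleGraph V) (w : Sym2 V → ℝ≥0) (γ : ℝ) (C : Set V)
    (Y : ℕ) : Set V :=
  nearSites G w C (σ.contacts G C Y) γ

/-- The supernode after `Y` whose contacts with `C` are nearest to `v`. -/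
noncomputable def captor (σ : PartialDecomp V) (G : SimpleGraph V) (w : Sym2 V → ℝ≥0) (C : Set V)
    (Y : ℕ) (v : V) : ℕ :=
  nearestSite G w C (σ.contacts G C Y) v

open scoped Classical in
/-- The state obtained from `σ` when `C` loses its adjacency to `Y`: every vertex of the collar of
`C` joins its captor, which separates the rest of `C` from `Y`. -/
noncomputable def detach (σ : PartialDecomp V) (G : SimpleGraph V) (w : Sym2 V → ℝ≥0) (γ : ℝ)
    (C : Set V) (Y : ℕ) : PartialDecomp V where
  label v := if v ∈ σ.collar G w γ C Y then some (σ.captor G w C Y v) else σ.label v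
  next := σ.next
  back := σ.back
  seen v := if v ∈ C then (σ.seen v).erase Y else σ.seen v
  skel := σ.skel

theorem mem_free_detach :
    v ∈ (σ.detach G w γ C Y).free ↔ v ∈ σ.free ∧ v ∉ σ.collar G w γ C Y := by
  by_cases hv : v ∈ σ.collar G w γ C Y <;> simp [free, detach, hv]

theorem mem_part_detach_of_notMem (hv : v ∉ C) :
    v ∈ (σ.detach G w γ C Y).part j ↔ v ∈ σ.part j := by
  have : v ∉ σ.collar G w γ C Y := fun h ↦ hv h.1
  simp [part, detach, this]

theorem mem_part_detach_of_mem_collar (hv : v ∈ σ.collar G w γ C Y) :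
    v ∈ (σ.detach G w γ C Y).part j ↔ σ.captor G w C Y v = j := by
  simp [part, detach, hv]

theorem IsFreePiece.part_subset_part_detach (hC : σ.IsFreePiece G C s) :
    σ.part j ⊆ (σ.detach G w γ C Y).part j := fun _ hv ↦
  (mem_part_detach_of_notMem fun hvC ↦ notMem_free_of_mem_part hv (hC.subset_free hvC)).2 hv

theorem IsFreePiece.mem_collar_of_mem_part_detach (hC : σ.IsFreePiece G C s) (hvC : v ∈ C)
    (hv : v ∈ (σ.detach G w γ C Y).part j) : v ∈ σ.collar G w γ C Y := by
  by_contra h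
  exact notMem_free_of_mem_part hv (mem_free_detach.2 ⟨hC.subset_free hvC, h⟩)

theorem IsFreePiece.seen_detach (hC : σ.IsFreePiece G C s) (hv : v ∈ C) :
    (σ.detach G w γ C Y).seen v = s.erase Y :=
  (if_pos hv).trans (by rw [hC.seen_eq hv])

theorem seen_detach_of_notMem (hv : v ∉ C) : (σ.detach G w γ C Y).seen v = σ.seen v := if_neg hv

theorem seen_detach_subset : (σ.detach G w γ C Y).seen v ⊆ σ.seen v := by
  by_cases hv : v ∈ C
  · exact (if_pos hv).trans_subset (Finset.erase_subset _ _)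
  · exact (seen_detach_of_notMem hv).subset

theorem exists_walkWithin_contacts [Finite V] (hC : σ.IsFreePiece G C s) (hvC : v ∈ C)
    (hv : v ∈ (σ.detach G w γ C Y).part j) :
    ∃ b ∈ σ.contacts G C Y j, WalkWithin G w ((σ.detach G w γ C Y).part j) v b γ := by
  have hvE := hC.mem_collar_of_mem_part_detach hvC hv
  obtain rfl := (mem_part_detach_of_mem_collar hvE).1 hv
  obtain ⟨b, hb, h⟩ := exists_walkWithin_cell hvE
  exact ⟨b, hb, h.mono_set fun u hu ↦ (mem_part_detach_of_mem_collar hu.1).2 hu.2⟩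

theorem mem_erase_of_mem_part_detach [Finite V] (hσ : σ.IsLegal G d) (hC : σ.IsFreePiece G C s)
    (hvC : v ∈ C) (hv : v ∈ (σ.detach G w γ C Y).part j) : j ∈ s.erase Y := by
  obtain ⟨b, ⟨hb, hY, p, hp, hpb⟩, -⟩ := exists_walkWithin_contacts hC hvC hv
  exact Finset.mem_erase.2 ⟨hY.ne', hC.mem_of_mem_part hσ hp hb hpb⟩

theorem mem_seen_of_mem_part_detach [Finite V] (hσ : σ.IsLegal G d) (hC : σ.IsFreePiece G C s)
    (hvC : v ∈ C) (hv : v ∈ (σ.detach G w γ C Y).part j) : j ∈ σ.seen v :=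
  hC.seen_eq hvC ▸ Finset.mem_of_mem_erase (mem_erase_of_mem_part_detach hσ hC hvC hv)

theorem mem_of_adj_of_mem_part_detach [Finite V] (hσ : σ.IsLegal G d) (hC : σ.IsFreePiece G C s)
    (hu : u ∈ C) (hv : v ∈ (σ.detach G w γ C Y).part j) (huv : G.Adj u v) : j ∈ s := by
  by_cases hvC : v ∈ C
  · exact Finset.mem_of_mem_erase (mem_erase_of_mem_part_detach hσ hC hvC hv)
  · exact hC.mem_of_mem_part hσ hu ((mem_part_detach_of_notMem hvC).1 hv) huv

theorem extends_detach [Finite V] (hσ : σ.IsLegal G d) (hC : σ.IsFreePiece G C s) :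
    σ.Extends (σ.detach G w γ C Y) where
  part_subset _ := hC.part_subset_part_detach
  territory_subset j _ := by
    rintro v (hv | ⟨hv, hj⟩)
    · by_cases hvC : v ∈ C
      · exact .inr ⟨hC.subset_free hvC, mem_seen_of_mem_part_detach hσ hC hvC hv⟩
      · exact .inl ((mem_part_detach_of_notMem hvC).1 hv)
    · exact .inr ⟨(mem_free_detach.1 hv).1, seen_detach_subset hj⟩

theorem notMem_of_mem_territory_detach [Finite V] (hσ : σ.IsLegal G d)
    (hC : σ.IsFreePiece G C s) (hv : v ∈ (σ.detach G w γ C Y).territory Y) : v ∉ C := by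
  intro hvC
  rcases hv with hv | ⟨-, hv⟩
  · exact Finset.notMem_erase Y s (mem_erase_of_mem_part_detach hσ hC hvC hv)
  · rw [hC.seen_detach hvC] at hv
    exact Finset.notMem_erase _ _ hv

theorem mem_seen_detach_of_adj [Finite V] (hσ : σ.IsLegal G d) (hC : σ.IsFreePiece G C s)
    (hY : ∀ u ∈ C, ∀ v ∈ σ.part Y, ¬ G.Adj u v) (hu : u ∈ (σ.detach G w γ C Y).free)
    (hv : v ∈ (σ.detach G w γ C Y).part j) (huv : G.Adj u v) :
    j ∈ (σ.detach G w γ C Y).seen u := by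
  have huσ := (mem_free_detach.1 hu).1
  by_cases hvC : v ∈ C
  · rw [hC.seen_detach (hC.mem_of_adj hvC huσ huv.symm)]
    exact mem_erase_of_mem_part_detach hσ hC hvC hv
  rw [mem_part_detach_of_notMem hvC] at hv
  by_cases huC : u ∈ C
  · rw [hC.seen_detach huC]
    refine Finset.mem_erase.2 ⟨?_, hC.mem_of_mem_part hσ huC hv huv⟩
    rintro rfl
    exact hY u huC v hv huv
  · rw [seen_detach_of_notMem huC]
    exact hσ.mem_seen_of_adj huσ hv huv

theorem mem_back_of_adj_detach [Finite V] (hσ : σ.IsLegal G d) (hC : σ.IsFreePiece G C s)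
    (hu : u ∈ (σ.detach G w γ C Y).part i) (hv : v ∈ (σ.detach G w γ C Y).part j) (hij : i < j)
    (huv : G.Adj u v) : i ∈ σ.back j := by
  by_cases huC : u ∈ C
  · exact hσ.mem_back_of_mem_seen (mem_seen_of_mem_part_detach hσ hC huC hu)
      (hC.seen_eq huC ▸ mem_of_adj_of_mem_part_detach hσ hC huC hv huv) hij
  by_cases hvC : v ∈ C
  · exact hσ.mem_back_of_mem_seen
      (hC.seen_eq hvC ▸ mem_of_adj_of_mem_part_detach hσ hC hvC hu huv.symm)
      (mem_seen_of_mem_part_detach hσ hC hvC hv) hij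
  rw [mem_part_detach_of_notMem huC] at hu
  rw [mem_part_detach_of_notMem hvC] at hv
  exact hσ.mem_back_of_adj hu hv hij huv

theorem IsLegal.detach [Finite V] (hσ : σ.IsLegal G d) (hC : σ.IsFreePiece G C s)
    (hY : ∀ u ∈ C, ∀ v ∈ σ.part Y, ¬ G.Adj u v) : (σ.detach G w γ C Y).IsLegal G d where
  lt_next {v j} hv := by
    by_cases hvC : v ∈ C
    · exact hσ.lt_next_of_mem_seen (mem_seen_of_mem_part_detach hσ hC hvC hv)
    · exact hσ.lt_next ((mem_part_detach_of_notMem hvC).1 hv)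
  lt_next_of_mem_seen hj := hσ.lt_next_of_mem_seen (seen_detach_subset hj)
  chordal := hσ.chordal
  mem_back_of_mem_seen hi hj :=
    hσ.mem_back_of_mem_seen (seen_detach_subset hi) (seen_detach_subset hj)
  seen_eq_of_adj {u v} hu hv huv := by
    have hu := (mem_free_detach.1 hu).1
    have hv := (mem_free_detach.1 hv).1
    by_cases huC : u ∈ C
    · rw [hC.seen_detach huC, hC.seen_detach (hC.mem_of_adj huC hv huv)]
    · rw [seen_detach_of_notMem huC, hσ.seen_eq_of_adj hu hv huv,
        seen_detach_of_notMem fun hvC ↦ huC (hC.mem_of_adj hvC hu huv.symm)]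
  mem_seen_of_adj := mem_seen_detach_of_adj hσ hC hY
  mem_back_of_adj := mem_back_of_adj_detach hσ hC
  exists_adj hij := by
    obtain ⟨u, hu, v, hv, huv⟩ := hσ.exists_adj hij
    exact ⟨u, hC.part_subset_part_detach hu, v, hC.part_subset_part_detach hv, huv⟩
  card_back_le := hσ.card_back_le
  connected {j} hj := by
    refine connected_induce_of_forall_walkWithin (w := w) (hσ.connected hj)
      hC.part_subset_part_detach fun v hv ↦ ?_
    by_cases hvC : v ∈ C
    · obtain ⟨b, hb, h⟩ := exists_walkWithin_contacts hC hvC hv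
      exact ⟨b, hb.1, γ, h⟩
    · exact ⟨v, (mem_part_detach_of_notMem hvC).1 hv, 0, .nil le_rfl⟩

theorem isBufferedFrom_detach [Finite V] (hσ : σ.IsLegal G d) (hC : σ.IsFreePiece G C s)
    (hY : ∀ u ∈ C, ∀ v ∈ σ.part Y, ¬ G.Adj u v) (hvC : v ∈ C) (hv : v ∉ σ.collar G w γ C Y) :
    (σ.detach G w γ C Y).IsBufferedFrom G w γ Y v := by
  intro z hz l h
  obtain ⟨p, hp, -, y, hyC, hpy, l₁, l₂, h₁, h₂, hl⟩ :=
    h.exit hvC (notMem_of_mem_territory_detach hσ hC hz)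
  have hl₂ := h₂.nonneg
  suffices γ ≤ l₁ by linarith
  obtain ⟨j, hj⟩ : ∃ j, y ∈ σ.part j :=
    exists_mem_part_of_notMem_free fun hy ↦ hyC (hC.mem_of_adj hp hy hpy)
  have hYj : Y ≤ j := (mem_domain_iff_of_mem_part hj).1
    ((extends_detach hσ hC).domain_subset (h₂.mem_left (territory_subset_domain hz)))
  have hne : Y ≠ j := by
    rintro rfl
    exact hY p hp y hj hpy
  by_contra! hlt
  exact hv ⟨hvC, j, y, ⟨hj, hYj.lt_of_ne hne, p, hp, hpy⟩, l₁, hlt,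
    h₁.mono_set Set.inter_subset_right⟩

theorem near_detach [Finite V] (hσ : σ.IsLegal G d) (hB : σ.IsBuffered G w γ d)
    (hC : σ.IsFreePiece G C s) (hYs : Y ∈ s) (hvC : v ∈ C)
    (hv : v ∈ (σ.detach G w γ C Y).part j) :
    ∃ t ⊆ σ.back j,
      (∀ u ∈ (σ.detach G w γ C Y).free, G.Adj u v → Disjoint t ((σ.detach G w γ C Y).seen u)) ∧
        (σ.skel j).IsNear G w ((σ.detach G w γ C Y).part j) (γ * #t) v := by
  obtain ⟨b, ⟨hbj, hYj, p, hp, hpb⟩, h⟩ := exists_walkWithin_contacts hC hvC hv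
  obtain ⟨t, htj, hdisj, hnear⟩ := hB.near hbj
  have hts : Disjoint t s := hC.seen_eq hp ▸ hdisj p (hC.subset_free hp) hpb
  have hYt : Y ∉ t := Finset.disjoint_right.1 hts hYs
  refine ⟨insert Y t, Finset.insert_subset ?_ htj, fun u hu huv ↦ ?_, ?_⟩
  · have hjs := Finset.mem_of_mem_erase (mem_erase_of_mem_part_detach hσ hC hvC hv)
    rw [← hC.seen_eq hvC] at hYs hjs
    exact hσ.mem_back_of_mem_seen hYs hjs hYj
  · rw [hC.seen_detach (hC.mem_of_adj hvC (mem_free_detach.1 hu).1 huv.symm),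
      Finset.disjoint_insert_left]
    exact ⟨Finset.notMem_erase _ _, hts.mono_right (Finset.erase_subset _ _)⟩
  · refine ((hnear.mono hC.part_subset_part_detach le_rfl).of_walkWithin h).mono subset_rfl ?_
    rw [Finset.card_insert_of_notMem hYt]
    push_cast
    linarith

theorem IsBuffered.detach [Finite V] (hB : σ.IsBuffered G w γ d) (hσ : σ.IsLegal G d)
    (hC : σ.IsFreePiece G C s) (hYs : Y ∈ s) (hY : ∀ u ∈ C, ∀ v ∈ σ.part Y, ¬ G.Adj u v) :
    (σ.detach G w γ C Y).IsBuffered G w γ d where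
  buffer_free {v i} hv hi hiv := by
    obtain ⟨hvσ, hvE⟩ := mem_free_detach.1 hv
    by_cases hiσ : i ∈ σ.seen v
    · have hvC : v ∈ C := by
        by_contra hvC
        exact hiv (by rwa [seen_detach_of_notMem hvC])
      rw [hC.seen_detach hvC, Finset.mem_erase] at hiv
      obtain rfl : i = Y := by
        by_contra hne
        exact hiv ⟨hne, hC.seen_eq hvC ▸ hiσ⟩
      exact isBufferedFrom_detach hσ hC hY hvC hvE
    · exact (hB.buffer_free hvσ hi hiσ).of_extends (extends_detach hσ hC) hi
  buffer_part {v i j} hv hij hi := by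
    by_cases hvC : v ∈ C
    · have hj := mem_seen_of_mem_part_detach hσ hC hvC hv
      have hin := hij.trans (hσ.lt_next_of_mem_seen hj)
      exact (hB.buffer_free (hC.subset_free hvC) hin
        fun h ↦ hi (hσ.mem_back_of_mem_seen h hj hij)).of_extends (extends_detach hσ hC) hin
    · rw [mem_part_detach_of_notMem hvC] at hv
      exact (hB.buffer_part hv hij hi).of_extends (extends_detach hσ hC)
        (hij.trans (hσ.lt_next hv))
  tight j := (hB.tight j).mono hC.part_subset_part_detach (extends_detach hσ hC).domain_subset
  card_terminals_le := hB.card_terminals_le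
  near {v j} hv := by
    by_cases hvC : v ∈ C
    · exact near_detach hσ hB hC hYs hvC hv
    · obtain ⟨t, htj, hdisj, hnear⟩ := hB.near ((mem_part_detach_of_notMem hvC).1 hv)
      exact ⟨t, htj,
        fun u hu huv ↦ (hdisj u (mem_free_detach.1 hu).1 huv).mono_right seen_detach_subset,
        hnear.mono hC.part_subset_part_detach le_rfl⟩

end PartialDecomp

end Detaching

section NewParts

namespace PartialDecomp

variable {σ : PartialDecomp V} {G : SimpleGraph V} {w : Sym2 V → ℝ≥0} {γ : ℝ} {d : ℕ}
  {s : Finset ℕ} {C : Set V} {sk : Skeleton V} {i j : ℕ} {u v : V}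

open scoped Classical in
/-- The state obtained from `σ` by making the support of `sk` a new supernode, created inside the
free piece `C` that sees the supernodes in `s`. -/
noncomputable def addPart (σ : PartialDecomp V) (C : Set V) (s : Finset ℕ) (sk : Skeleton V) :
    PartialDecomp V where
  label v := if v ∈ sk.support then some σ.next else σ.label v
  next := σ.next + 1
  back := Function.update σ.back σ.next s
  seen v := if v ∈ C then insert σ.next (σ.seen v) else σ.seen v
  skel := Function.update σ.skel σ.next sk

/-- The conditions under which the support of `sk` can become a supernode inside the free piece `C`
that sees the supernodes in `s`. -/
structure Admits (σ : PartialDecomp V) (G : SimpleGraph V) (w : Sym2 V → ℝ≥0) (d : ℕ) (C : Set V)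
    (s : Finset ℕ) (sk : Skeleton V) : Prop where
  isFreePiece : σ.IsFreePiece G C s
  support_subset : sk.support ⊆ C
  connected : (G.induce sk.support).Connected
  exists_adj : ∀ i ∈ s, ∃ u ∈ σ.part i, ∃ v ∈ sk.support, G.Adj u v
  tight : sk.IsTight G w sk.support σ.free
  card_le : #s ≤ d
  card_terminals_le : #sk.terminals ≤ d

theorem mem_free_addPart : v ∈ (σ.addPart C s sk).free ↔ v ∈ σ.free ∧ v ∉ sk.support := by
  by_cases hv : v ∈ sk.support <;> simp [free, addPart, hv]

theorem mem_part_addPart_of_mem (hv : v ∈ sk.support) :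
    v ∈ (σ.addPart C s sk).part j ↔ σ.next = j := by
  simp [part, addPart, hv]

theorem mem_part_addPart_of_notMem (hv : v ∉ sk.support) :
    v ∈ (σ.addPart C s sk).part j ↔ v ∈ σ.part j := by
  simp [part, addPart, hv]

theorem back_addPart_next : (σ.addPart C s sk).back σ.next = s := Function.update_self _ _ _

theorem back_addPart_of_ne (hj : j ≠ σ.next) : (σ.addPart C s sk).back j = σ.back j :=
  Function.update_of_ne hj _ _

theorem skel_addPart_next : (σ.addPart C s sk).skel σ.next = sk := Function.update_self _ _ _

theorem skel_addPart_of_ne (hj : j ≠ σ.next) : (σ.addPart C s sk).skel j = σ.skel j :=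
  Function.update_of_ne hj _ _

theorem seen_addPart_of_mem (hv : v ∈ C) :
    (σ.addPart C s sk).seen v = insert σ.next (σ.seen v) :=
  if_pos hv

theorem seen_addPart_of_notMem (hv : v ∉ C) : (σ.addPart C s sk).seen v = σ.seen v := if_neg hv

theorem mem_seen_addPart_of_ne (hj : j ≠ σ.next) :
    j ∈ (σ.addPart C s sk).seen v ↔ j ∈ σ.seen v := by
  by_cases hv : v ∈ C
  · rw [seen_addPart_of_mem hv, Finset.mem_insert, or_iff_right hj]
  · rw [seen_addPart_of_notMem hv]

theorem IsLegal.part_next (hσ : σ.IsLegal G d) : σ.part σ.next = ∅ :=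
  Set.eq_empty_of_forall_notMem fun _ hv ↦ (hσ.lt_next hv).false

theorem IsLegal.domain_next (hσ : σ.IsLegal G d) : σ.domain σ.next = σ.free := by
  refine Set.Subset.antisymm (fun v hv ↦ ?_) free_subset_domain
  by_contra hvf
  obtain ⟨j, hj⟩ := exists_mem_part_of_notMem_free hvf
  exact (hσ.lt_next hj).not_ge ((mem_domain_iff_of_mem_part hj).1 hv)

theorem part_addPart_next (hσ : σ.IsLegal G d) :
    (σ.addPart C s sk).part σ.next = sk.support := by
  ext v
  by_cases hv : v ∈ sk.support
  · simp only [mem_part_addPart_of_mem hv, hv]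
  · simp only [mem_part_addPart_of_notMem hv, hσ.part_next, hv, Set.mem_empty_iff_false]

namespace Admits

theorem subset_free (h : σ.Admits G w d C s sk) : sk.support ⊆ σ.free :=
  h.support_subset.trans h.isFreePiece.subset_free

theorem part_of_ne (h : σ.Admits G w d C s sk) (hj : j ≠ σ.next) :
    (σ.addPart C s sk).part j = σ.part j := by
  ext v
  by_cases hv : v ∈ sk.support
  · have : v ∉ σ.part j := fun hvj ↦ notMem_free_of_mem_part hvj (h.subset_free hv)
    simp only [mem_part_addPart_of_mem hv, this, hj.symm]
  · exact mem_part_addPart_of_notMem hv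

theorem mem_back_of_mem (h : σ.Admits G w d C s sk) (hσ : σ.IsLegal G d) (hi : i ∈ s) (hj : j ∈ s)
    (hij : i < j) : i ∈ σ.back j := by
  obtain ⟨⟨v, hv⟩⟩ := h.connected.nonempty
  have hs := h.isFreePiece.seen_eq (h.support_subset hv)
  exact hσ.mem_back_of_mem_seen (hs ▸ hi) (hs ▸ hj) hij

theorem lt_next_of_mem (h : σ.Admits G w d C s sk) (hσ : σ.IsLegal G d) (hi : i ∈ s) :
    i < σ.next := by
  obtain ⟨u, hu, -⟩ := h.exists_adj i hi
  exact hσ.lt_next hu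

theorem extends_addPart (h : σ.Admits G w d C s sk) (hσ : σ.IsLegal G d) :
    σ.Extends (σ.addPart C s sk) where
  part_subset j := by
    by_cases hj : j = σ.next
    · rw [hj, hσ.part_next]
      exact Set.empty_subset _
    · exact (h.part_of_ne hj).superset
  territory_subset j hj := by
    rintro v (hv | ⟨hv, hvj⟩)
    · rw [h.part_of_ne hj.ne] at hv
      exact .inl hv
    · exact .inr ⟨(mem_free_addPart.1 hv).1, (mem_seen_addPart_of_ne hj.ne).1 hvj⟩

theorem isChordalOrder_back (h : σ.Admits G w d C s sk) (hσ : σ.IsLegal G d) :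
    IsChordalOrder (σ.addPart C s sk).back where
  lt_of_mem {i j} hi := by
    rcases eq_or_ne j σ.next with rfl | hj
    · rw [back_addPart_next] at hi
      exact h.lt_next_of_mem hσ hi
    · rw [back_addPart_of_ne hj] at hi
      exact hσ.chordal.lt_of_mem hi
  mem_of_mem_of_lt {i j m} hi hj hij := by
    rcases eq_or_ne m σ.next with rfl | hm
    · rw [back_addPart_next] at hi hj
      rw [back_addPart_of_ne (h.lt_next_of_mem hσ hj).ne]
      exact h.mem_back_of_mem hσ hi hj hij
    · rw [back_addPart_of_ne hm] at hi hj
      have hjn := (hσ.chordal.lt_of_mem hj).trans (hσ.lt_next_of_mem_back hj)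
      rw [back_addPart_of_ne hjn.ne]
      exact hσ.chordal.mem_of_mem_of_lt hi hj hij

theorem mem_back_of_mem_seen (h : σ.Admits G w d C s sk) (hσ : σ.IsLegal G d)
    (hi : i ∈ (σ.addPart C s sk).seen v) (hj : j ∈ (σ.addPart C s sk).seen v) (hij : i < j) :
    i ∈ (σ.addPart C s sk).back j := by
  rcases eq_or_ne j σ.next with rfl | hjn
  · rw [mem_seen_addPart_of_ne hij.ne] at hi
    have hv : v ∈ C := by
      by_contra hv
      rw [seen_addPart_of_notMem hv] at hj
      exact (hσ.lt_next_of_mem_seen hj).false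
    rwa [back_addPart_next, ← h.isFreePiece.seen_eq hv]
  · rw [mem_seen_addPart_of_ne hjn] at hj
    rw [mem_seen_addPart_of_ne (hij.trans (hσ.lt_next_of_mem_seen hj)).ne] at hi
    rw [back_addPart_of_ne hjn]
    exact hσ.mem_back_of_mem_seen hi hj hij

theorem mem_back_of_adj (h : σ.Admits G w d C s sk) (hσ : σ.IsLegal G d)
    (hu : u ∈ (σ.addPart C s sk).part i) (hv : v ∈ (σ.addPart C s sk).part j) (hij : i < j)
    (huv : G.Adj u v) : i ∈ (σ.addPart C s sk).back j := by
  rcases eq_or_ne j σ.next with rfl | hj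
  · rw [part_addPart_next hσ] at hv
    rw [h.part_of_ne hij.ne] at hu
    rw [back_addPart_next]
    exact h.isFreePiece.mem_of_mem_part hσ (h.support_subset hv) hu huv.symm
  · rw [h.part_of_ne hj] at hv
    rw [h.part_of_ne (hij.trans (hσ.lt_next hv)).ne] at hu
    rw [back_addPart_of_ne hj]
    exact hσ.mem_back_of_adj hu hv hij huv

theorem exists_adj_of_mem_back (h : σ.Admits G w d C s sk) (hσ : σ.IsLegal G d)
    (hij : i ∈ (σ.addPart C s sk).back j) :
    ∃ u ∈ (σ.addPart C s sk).part i, ∃ v ∈ (σ.addPart C s sk).part j, G.Adj u v := by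
  have hsub := (h.extends_addPart hσ).part_subset
  rcases eq_or_ne j σ.next with rfl | hj
  · rw [back_addPart_next] at hij
    obtain ⟨u, hu, v, hv, huv⟩ := h.exists_adj i hij
    exact ⟨u, hsub i hu, v, (part_addPart_next hσ).superset hv, huv⟩
  · rw [back_addPart_of_ne hj] at hij
    obtain ⟨u, hu, v, hv, huv⟩ := hσ.exists_adj hij
    exact ⟨u, hsub i hu, v, hsub j hv, huv⟩

theorem isLegal_addPart (h : σ.Admits G w d C s sk) (hσ : σ.IsLegal G d) :
    (σ.addPart C s sk).IsLegal G d where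
  lt_next {v j} hv := by
    refine Nat.lt_succ_iff_lt_or_eq.2 (or_iff_not_imp_right.2 fun hj ↦ ?_)
    exact hσ.lt_next ((h.part_of_ne hj).subset hv)
  lt_next_of_mem_seen {v j} hv := by
    refine Nat.lt_succ_iff_lt_or_eq.2 (or_iff_not_imp_right.2 fun hj ↦ ?_)
    exact hσ.lt_next_of_mem_seen ((mem_seen_addPart_of_ne hj).1 hv)
  chordal := h.isChordalOrder_back hσ
  mem_back_of_mem_seen := h.mem_back_of_mem_seen hσ
  seen_eq_of_adj {u v} hu hv huv := by
    have hu := (mem_free_addPart.1 hu).1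
    have hv := (mem_free_addPart.1 hv).1
    have hseen := hσ.seen_eq_of_adj hu hv huv
    have hC := h.isFreePiece.mem_iff_of_adj hu hv huv
    by_cases huC : u ∈ C
    · rw [seen_addPart_of_mem huC, seen_addPart_of_mem (hC.1 huC), hseen]
    · rw [seen_addPart_of_notMem huC, seen_addPart_of_notMem (hC.not.1 huC), hseen]
  mem_seen_of_adj {u v j} hu hv huv := by
    have hu := (mem_free_addPart.1 hu).1
    rcases eq_or_ne j σ.next with rfl | hj
    · rw [part_addPart_next hσ] at hv
      rw [seen_addPart_of_mem (h.isFreePiece.mem_of_adj (h.support_subset hv) hu huv.symm)]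
      exact Finset.mem_insert_self _ _
    · rw [h.part_of_ne hj] at hv
      exact (mem_seen_addPart_of_ne hj).2 (hσ.mem_seen_of_adj hu hv huv)
  mem_back_of_adj := h.mem_back_of_adj hσ
  exists_adj := h.exists_adj_of_mem_back hσ
  card_back_le j := by
    rcases eq_or_ne j σ.next with rfl | hj
    · rw [back_addPart_next]
      exact h.card_le
    · rw [back_addPart_of_ne hj]
      exact hσ.card_back_le j
  connected {j} hj := by
    rcases eq_or_ne j σ.next with rfl | hjn
    · rw [part_addPart_next hσ]
      exact h.connected
    · rw [h.part_of_ne hjn]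
      exact hσ.connected ((Nat.lt_succ_iff.1 hj).lt_of_ne hjn)

theorem isBufferedFrom_next (h : σ.Admits G w d C s sk) (hσ : σ.IsLegal G d) (hv : v ∉ C) :
    (σ.addPart C s sk).IsBufferedFrom G w γ σ.next v := by
  intro z hz l hl
  have hzC : z ∈ C := by
    rcases hz with hz | ⟨-, hz⟩
    · exact h.support_subset ((part_addPart_next hσ).subset hz)
    · by_contra hzC
      rw [seen_addPart_of_notMem hzC] at hz
      exact (hσ.lt_next_of_mem_seen hz).false
  obtain ⟨p, hpC, hp, y, hyC, hpy, -⟩ := hl.exit (R := Cᶜ) hv (not_not.2 hzC)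
  have hpf := hσ.domain_next.subset ((h.extends_addPart hσ).domain_subset hp)
  exact absurd (h.isFreePiece.mem_of_adj (not_not.1 hyC) hpf hpy.symm) hpC

theorem near_addPart (h : σ.Admits G w d C s sk) (hσ : σ.IsLegal G d)
    (hB : σ.IsBuffered G w γ d) (hv : v ∈ (σ.addPart C s sk).part j) :
    ∃ t ⊆ (σ.addPart C s sk).back j,
      (∀ u ∈ (σ.addPart C s sk).free, G.Adj u v → Disjoint t ((σ.addPart C s sk).seen u)) ∧
        ((σ.addPart C s sk).skel j).IsNear G w ((σ.addPart C s sk).part j) (γ * #t) v := by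
  rcases eq_or_ne j σ.next with rfl | hj
  · obtain ⟨x, hx, hvx⟩ := (part_addPart_next hσ).subset hv
    rw [skel_addPart_next]
    exact ⟨∅, Finset.empty_subset _, fun _ _ _ ↦ Finset.disjoint_empty_left _,
      x, hx, v, hvx, .nil (by simp)⟩
  · rw [h.part_of_ne hj] at hv
    rw [back_addPart_of_ne hj, skel_addPart_of_ne hj, h.part_of_ne hj]
    obtain ⟨t, htj, hdisj, hnear⟩ := hB.near hv
    refine ⟨t, htj, fun u hu huv ↦ Finset.disjoint_left.2 fun i hi ↦ ?_, hnear⟩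
    have hin := (hσ.chordal.lt_of_mem (htj hi)).trans (hσ.lt_next hv)
    rw [mem_seen_addPart_of_ne hin.ne]
    exact Finset.disjoint_left.1 (hdisj u (mem_free_addPart.1 hu).1 huv) hi

theorem isBuffered_addPart (h : σ.Admits G w d C s sk) (hσ : σ.IsLegal G d)
    (hB : σ.IsBuffered G w γ d) : (σ.addPart C s sk).IsBuffered G w γ d where
  buffer_free {v i} hv hi hiv := by
    rcases eq_or_ne i σ.next with rfl | hin
    · refine h.isBufferedFrom_next hσ fun hvC ↦ hiv ?_
      rw [seen_addPart_of_mem hvC]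
      exact Finset.mem_insert_self _ _
    · have hi := (Nat.lt_succ_iff.1 hi).lt_of_ne hin
      rw [mem_seen_addPart_of_ne hin] at hiv
      exact (hB.buffer_free (mem_free_addPart.1 hv).1 hi hiv).of_extends (h.extends_addPart hσ) hi
  buffer_part {v i j} hv hij hi := by
    rcases eq_or_ne j σ.next with rfl | hj
    · rw [part_addPart_next hσ] at hv
      rw [back_addPart_next, ← h.isFreePiece.seen_eq (h.support_subset hv)] at hi
      exact (hB.buffer_free (h.subset_free hv) hij hi).of_extends (h.extends_addPart hσ) hij
    · rw [h.part_of_ne hj] at hv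
      rw [back_addPart_of_ne hj] at hi
      exact (hB.buffer_part hv hij hi).of_extends (h.extends_addPart hσ)
        (hij.trans (hσ.lt_next hv))
  tight j := by
    have hdom := (h.extends_addPart hσ).domain_subset (j := j)
    rcases eq_or_ne j σ.next with rfl | hj
    · rw [skel_addPart_next, part_addPart_next hσ]
      exact h.tight.mono subset_rfl (hdom.trans hσ.domain_next.subset)
    · rw [skel_addPart_of_ne hj, h.part_of_ne hj]
      exact (hB.tight j).mono subset_rfl hdom
  card_terminals_le j := by
    rcases eq_or_ne j σ.next with rfl | hj
    · rw [skel_addPart_next]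
      exact h.card_terminals_le
    · rw [skel_addPart_of_ne hj]
      exact hB.card_terminals_le j
  near := h.near_addPart hσ hB

end Admits

end PartialDecomp

end NewParts

section Existence

variable {G : SimpleGraph V} {w : Sym2 V → ℝ≥0} {γ : ℝ} {d h : ℕ}

theorem hasCompleteMinor_of_le_card {ι : Type*} [LinearOrder ι] {s : Finset ι} {B : ι → Set V}
    (hs : h ≤ #s) (hconn : ∀ i ∈ s, (G.induce (B i)).Connected)
    (hpair : ∀ i ∈ s, ∀ j ∈ s, i < j →
      Disjoint (B i) (B j) ∧ ∃ u ∈ B i, ∃ v ∈ B j, G.Adj u v) :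
    HasCompleteMinor G h := by
  let e := s.orderEmbOfCardLe hs
  have he : ∀ i, e i ∈ s := s.orderEmbOfCardLe_mem hs
  have pair_of_lt : ∀ i j, i < j → Disjoint (B (e i)) (B (e j)) ∧
      ∃ u ∈ B (e i), ∃ v ∈ B (e j), G.Adj u v :=
    fun i j hij ↦ hpair _ (he i) _ (he j) (e.strictMono hij)
  refine ⟨fun i ↦ B (e i), fun i ↦ hconn _ (he i), fun i j hij ↦ ?_, fun i j hij ↦ ?_⟩ <;>
    rcases hij.lt_or_gt with hlt | hgt
  · exact (pair_of_lt i j hlt).1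
  · exact (pair_of_lt j i hgt).1.symm
  · exact (pair_of_lt i j hlt).2
  · obtain ⟨-, u, hu, v, hv, huv⟩ := pair_of_lt j i hgt
    exact ⟨v, hv, u, hu, huv.symm⟩

namespace PartialDecomp

variable {σ : PartialDecomp V} {C : Set V} {s : Finset ℕ} {u : V}

/- The supernodes in `s` and the piece `C` are the branch sets of a complete minor. -/
theorem IsLegal.card_lt_of_forall_adj (hσ : σ.IsLegal G d) (hG : ¬ HasCompleteMinor G (d + 1))
    (hC : σ.IsFreePiece G C s) (hconn : (G.induce C).Connected)
    (hadj : ∀ i ∈ s, ∃ u ∈ C, ∃ v ∈ σ.part i, G.Adj u v) : #s < d := by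
  obtain ⟨⟨c, hc⟩⟩ := hconn.nonempty
  have hlt : ∀ i ∈ s, i < σ.next := fun i hi ↦ hσ.lt_next_of_mem_seen (hC.seen_eq hc ▸ hi)
  let B := Function.update σ.part σ.next C
  have hB : ∀ i ∈ s, B i = σ.part i := fun i hi ↦ Function.update_of_ne (hlt i hi).ne _ _
  have hBnext : B σ.next = C := Function.update_self _ _ _
  by_contra! hle
  replace hle := Nat.succ_le_succ hle
  rw [Nat.succ_eq_add_one #s, ← Finset.card_insert_of_notMem fun hi ↦ (hlt _ hi).false] at hle
  refine hG (hasCompleteMinor_of_le_card (B := B) hle (fun i hi ↦ ?_) fun i hi j hj hij ↦ ?_)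
  · rcases Finset.mem_insert.1 hi with rfl | hi
    · rwa [hBnext]
    · exact hB i hi ▸ hσ.connected (hlt i hi)
  rcases Finset.mem_insert.1 hj with rfl | hj
  · have hi := Finset.mem_of_mem_insert_of_ne hi hij.ne
    obtain ⟨u, hu, v, hv, huv⟩ := hadj i hi
    rw [hB i hi, hBnext]
    exact ⟨Set.disjoint_left.2 fun x hx hxC ↦ notMem_free_of_mem_part hx (hC.subset_free hxC),
      v, hv, u, hu, huv.symm⟩
  · have hi := Finset.mem_of_mem_insert_of_ne hi (hij.trans (hlt j hj)).ne
    rw [hB i hi, hB j hj]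
    rw [← hC.seen_eq hc] at hi hj
    exact ⟨Set.disjoint_left.2 fun x hx hx' ↦ hij.ne (eq_of_mem_part hx hx'),
      hσ.exists_adj (hσ.mem_back_of_mem_seen hi hj hij)⟩

theorem IsLegal.exists_admits [Finite V] (hσ : σ.IsLegal G d) (hu : u ∈ σ.free)
    (hadj : ∀ i ∈ σ.seen u, ∃ x ∈ component G w σ.free u, ∃ v ∈ σ.part i, G.Adj x v)
    (hd : #(σ.seen u) < d) :
    ∃ sk, σ.Admits G w d (component G w σ.free u) (σ.seen u) sk := by
  classical
  have : Nonempty V := ⟨u⟩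
  choose! x hxC q hq hxq using hadj
  have hT : (insert u ((σ.seen u).image x) : Finset V) ≤ component G w σ.free u := by
    rw [Finset.coe_insert, Finset.coe_image]
    exact Set.insert_subset (mem_component_self hu) (Set.image_subset_iff.2 hxC)
  obtain ⟨sk, hterm, hTsub, hsubC, hconn, htight⟩ :=
    Skeleton.exists_isTight_support hu (Finset.mem_insert_self _ _) hT
  refine ⟨sk, hσ.isFreePiece_component hu, hsubC, hconn, fun i hi ↦ ?_, htight, hd.le, ?_⟩
  · exact ⟨q i, hq i hi, x i,
      hTsub (Finset.mem_insert_of_mem (Finset.mem_image_of_mem x hi)), (hxq i hi).symm⟩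
  · rw [hterm]
    exact ((Finset.card_insert_le _ _).trans (Nat.add_le_add_right Finset.card_image_le 1)).trans hd

/-- The number of free vertices and the number of pairs of a vertex and a supernode it sees, ordered
lexicographically; every step of the construction decreases it. -/
noncomputable def potential [Fintype V] (σ : PartialDecomp V) : ℕ ×ₗ ℕ :=
  toLex (σ.free.ncard, ∑ v, #(σ.seen v))

theorem Admits.potential_addPart_lt [Fintype V] {sk : Skeleton V}
    (h : σ.Admits G w d C s sk) : (σ.addPart C s sk).potential < σ.potential := by
  obtain ⟨⟨v, hv⟩⟩ := h.connected.nonempty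
  refine Prod.Lex.toLex_lt_toLex.2 (.inl (Set.ncard_lt_ncard ⟨?_, ?_⟩))
  · exact fun v hv ↦ (mem_free_addPart.1 hv).1
  · exact fun hsub ↦ (mem_free_addPart.1 (hsub (h.subset_free hv))).2 hv

theorem IsFreePiece.potential_detach_lt [Fintype V] {Y : ℕ} (hC : σ.IsFreePiece G C s)
    (hu : u ∈ C) (hY : Y ∈ s) : (σ.detach G w γ C Y).potential < σ.potential := by
  refine Prod.Lex.toLex_lt_toLex'.2 ⟨Set.ncard_le_ncard fun v hv ↦ (mem_free_detach.1 hv).1,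
    fun _ ↦ Finset.sum_lt_sum (fun v _ ↦ Finset.card_le_card seen_detach_subset)
      ⟨u, Finset.mem_univ u, ?_⟩⟩
  rw [hC.seen_detach hu, hC.seen_eq hu]
  exact Finset.card_erase_lt_of_mem hY

theorem IsLegal.exists_potential_lt [Fintype V] (hσ : σ.IsLegal G d)
    (hB : σ.IsBuffered G w γ d) (hG : ¬ HasCompleteMinor G (d + 1)) (hu : u ∈ σ.free) :
    ∃ τ : PartialDecomp V, τ.IsLegal G d ∧ τ.IsBuffered G w γ d ∧
      τ.potential < σ.potential := by
  have hC := hσ.isFreePiece_component (w := w) hu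
  by_cases hadj : ∀ i ∈ σ.seen u, ∃ x ∈ component G w σ.free u, ∃ v ∈ σ.part i, G.Adj x v
  · have hcard := hσ.card_lt_of_forall_adj hG hC (connected_induce_component hu) hadj
    obtain ⟨sk, hsk⟩ := hσ.exists_admits hu hadj hcard
    exact ⟨_, hsk.isLegal_addPart hσ, hsk.isBuffered_addPart hσ hB, hsk.potential_addPart_lt⟩
  · push Not at hadj
    obtain ⟨Y, hYs, hY⟩ := hadj
    exact ⟨_, hσ.detach hC hY, hB.detach hσ hC hYs hY,
      hC.potential_detach_lt (mem_component_self hu) hYs⟩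

/-- The state in which all vertices are free. -/
def initial : PartialDecomp V where
  label _ := none
  next := 0
  back _ := ∅
  seen _ := ∅
  skel _ := ⟨∅, fun _ ↦ ∅, 0⟩

theorem notMem_part_initial (v : V) (j : ℕ) : v ∉ (initial : PartialDecomp V).part j :=
  (Option.some_ne_none j).symm

theorem isLegal_initial : (initial : PartialDecomp V).IsLegal G d where
  lt_next hv := (notMem_part_initial _ _ hv).elim
  lt_next_of_mem_seen hj := (Finset.notMem_empty _ hj).elim
  chordal := ⟨fun hi ↦ (Finset.notMem_empty _ hi).elim, fun hi ↦ (Finset.notMem_empty _ hi).elim⟩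
  mem_back_of_mem_seen hi := (Finset.notMem_empty _ hi).elim
  seen_eq_of_adj _ _ _ := rfl
  mem_seen_of_adj _ hv := (notMem_part_initial _ _ hv).elim
  mem_back_of_adj hu := (notMem_part_initial _ _ hu).elim
  exists_adj hi := (Finset.notMem_empty _ hi).elim
  card_back_le _ := Nat.zero_le d
  connected hj := (Nat.not_lt_zero _ hj).elim

theorem isBuffered_initial : (initial : PartialDecomp V).IsBuffered G w γ d where
  buffer_free _ hi := (Nat.not_lt_zero _ hi).elim
  buffer_part hv := (notMem_part_initial _ _ hv).elim
  tight _ := ⟨fun _ hx ↦ (Finset.notMem_empty _ hx).elim,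
    fun _ hx ↦ (Finset.notMem_empty _ hx).elim,
    fun _ _ _ _ _ ↦ add_nonneg (NNReal.coe_nonneg _) le_rfl⟩
  card_terminals_le _ := Nat.zero_le d
  near hv := (notMem_part_initial _ _ hv).elim

theorem IsBuffered.exists_isBufferedCopDecomp (hB : σ.IsBuffered G w γ d) (hσ : σ.IsLegal G d)
    (hγ : 0 ≤ γ) (hfree : σ.free = ∅) :
    ∃ f : V → ℕ, IsBufferedCopDecomp G w γ d f σ.back σ.skel := by
  have hpart : ∀ v, ∃ j, v ∈ σ.part j := fun v ↦
    exists_mem_part_of_notMem_free (hfree ▸ Set.notMem_empty v)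
  choose f hf using hpart
  have part_eq : ∀ j, σ.part j = {v | f v = j} := fun j ↦
    Set.ext fun v ↦ ⟨eq_of_mem_part (hf v), fun h ↦ h ▸ hf v⟩
  have domain_eq : ∀ j, σ.domain j = {v | j ≤ f v} := fun j ↦
    Set.ext fun v ↦ mem_domain_iff_of_mem_part (hf v)
  refine ⟨f, hσ.chordal, fun huv hlt ↦ hσ.mem_back_of_adj (hf _) (hf _) hlt huv, hσ.card_back_le,
    fun hlt hmem h ↦ ?_, fun j ↦ ?_, hB.card_terminals_le, fun a ↦ ?_⟩
  · exact hB.buffer_part (hf _) hlt hmem _ (.inl (hf _)) _ (domain_eq _ ▸ h)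
  · exact part_eq j ▸ domain_eq j ▸ hB.tight j
  · obtain ⟨t, ht, -, hnear⟩ := hB.near (hf a)
    have hcard : #t ≤ d := (Finset.card_le_card ht).trans (hσ.card_back_le _)
    exact hnear.mono (part_eq _).subset (by gcongr)

end PartialDecomp

theorem exists_isBufferedCopDecomp [Finite V] (hG : ¬ HasCompleteMinor G (d + 1)) (w : Sym2 V → ℝ≥0)
    (hγ : 0 ≤ γ) : ∃ (f : V → ℕ) (K : ℕ → Finset ℕ) (sk : ℕ → Skeleton V),
      IsBufferedCopDecomp G w γ d f K sk := by
  have := Fintype.ofFinite V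
  obtain ⟨σ, ⟨hσ, hB⟩, hmin⟩ := exists_minimalFor_of_wellFoundedLT
    (fun σ : PartialDecomp V ↦ σ.IsLegal G d ∧ σ.IsBuffered G w γ d)
    PartialDecomp.potential ⟨_, PartialDecomp.isLegal_initial, PartialDecomp.isBuffered_initial⟩
  have hfree : σ.free = ∅ := by
    by_contra! ⟨u, hu⟩
    obtain ⟨τ, hτ, hBτ, hlt⟩ := hσ.exists_potential_lt hB hG hu
    exact (hmin ⟨hτ, hBτ⟩ hlt.le).not_gt hlt
  obtain ⟨f, hf⟩ := hB.exists_isBufferedCopDecomp hσ hγ hfree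
  exact ⟨f, _, _, hf⟩

end Existence

section Covers

variable {G : SimpleGraph V} {d : ℕ} {ε r : ℝ}

theorem exists_cover_of_not_hasCompleteMinor [Finite V] (hG : ¬ HasCompleteMinor G (d + 1))
    (w : Sym2 V → ℝ≥0) (hε0 : 0 < ε) (hε8 : ε < 8) (hr : 0 < r) :
    ∃ 𝒟 : Set (Set V), (∀ v, ∃ A ∈ 𝒟, ∀ u, WalkWithin G w Set.univ v u r → u ∈ A) ∧
      (∀ A ∈ 𝒟, ∀ u ∈ A, ∀ v ∈ A, WalkWithin G w Set.univ u v ((4 + ε) * r)) ∧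
      ∀ v, ({A | A ∈ 𝒟 ∧ v ∈ A}.ncard : ℝ) ≤
        (2 * ⌈24 * (d + 1) / ε⌉₊).multichoose d * (16 / ε + 6) * d := by
  set m := ⌈24 * (d + 1) / ε⌉₊
  set γ := ε * r / (4 * (d + 1)) with hγ
  set δ := ε * r / 4 with hδ
  set L := 2 * r + (γ * d + δ) with hL
  have hγ0 : 0 < γ := by positivity
  have hδ0 : 0 < δ := by positivity
  have hγδ : γ * (d + 1) = δ := by rw [hγ, hδ]; field_simp
  have hm : 6 * r ≤ m * γ := calc
    6 * r = 24 * (d + 1) / ε * γ := by rw [hγ]; field_simp; norm_num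
    _ ≤ m * γ := by gcongr; exact Nat.le_ceil _
  have hLr : 2 * L ≤ (4 + ε) * r := by linarith [hL]
  have hLm : L < m * γ := by
    have := mul_lt_mul_of_pos_right hε8 hr
    linarith
  obtain ⟨f, K, sk, hf⟩ := exists_isBufferedCopDecomp hG w hγ0.le
  obtain ⟨𝒟, hcover, hdiam, hoverlap⟩ := hf.exists_cover hr.le hδ0 hLm
  refine ⟨𝒟, hcover, fun A hA u hu v hv ↦ (hdiam A hA u hu v hv).mono_weight hLr, fun v ↦ ?_⟩
  have hnet : 2 * L / δ + 2 ≤ 16 / ε + 6 := by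
    have : (4 + ε) * r / δ = 16 / ε + 4 := by rw [hδ]; field_simp; ring
    have := div_le_div_of_nonneg_right hLr hδ0.le
    linarith
  have hfloor := (Nat.floor_le (by positivity : 0 ≤ 2 * L / δ + 2)).trans hnet
  calc ({A | A ∈ 𝒟 ∧ v ∈ A}.ncard : ℝ)
      ≤ (2 * m).multichoose d * (d * ⌊2 * L / δ + 2⌋₊) := mod_cast hoverlap v
    _ ≤ (2 * m).multichoose d * (d * (16 / ε + 6)) := by gcongr
    _ = _ := by ring

end Covers

section ExtendedWeights

variable {G G' : SimpleGraph V} {w : Sym2 V → ℝ≥0∞} {u v : V} {l : ℝ}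

theorem HasCompleteMinor.mono {h : ℕ} (hG : HasCompleteMinor G h) (hle : G ≤ G') :
    HasCompleteMinor G' h := by
  obtain ⟨B, hconn, hdisj, hadj⟩ := hG
  refine ⟨B, fun i ↦ (hconn i).mono (SimpleGraph.comap_monotone _ hle), hdisj, fun i j hij ↦ ?_⟩
  obtain ⟨u, hu, v, hv, huv⟩ := hadj i j hij
  exact ⟨u, hu, v, hv, hle huv⟩

theorem walkWeight_cons {x : V} (hxu : G.Adj x u) (p : G.Walk u v) :
    walkWeight w (p.cons hxu) = w s(x, u) + walkWeight w p := by
  simp [walkWeight]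

theorem walkWithin_of_walkWeight_ne_top (p : G.Walk u v) (hp : walkWeight w p ≠ ⊤) :
    WalkWithin (G.deleteEdges (w ⁻¹' {⊤})) (fun e ↦ (w e).toNNReal) Set.univ u v
      (walkWeight w p).toReal := by
  induction p with
  | nil => exact .nil ENNReal.toReal_nonneg
  | cons hxu p ih =>
    rw [walkWeight_cons, ENNReal.add_ne_top] at hp
    rw [walkWeight_cons, ENNReal.toReal_add hp.1 hp.2]
    exact .cons (Set.mem_univ _) (SimpleGraph.deleteEdges_adj.2 ⟨hxu, hp.1⟩) (ih hp.2) le_rfl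

theorem exists_walkWeight_le_of_walkWithin
    (h : WalkWithin (G.deleteEdges (w ⁻¹' {⊤})) (fun e ↦ (w e).toNNReal) Set.univ u v l) :
    ∃ p : G.Walk u v, walkWeight w p ≤ ENNReal.ofReal l := by
  induction h with
  | nil _ => exact ⟨.nil, by simp [walkWeight]⟩
  | @cons x y z l l' _ hxy h hl ih =>
    obtain ⟨p, hp⟩ := ih
    obtain ⟨hxy, hfin⟩ := SimpleGraph.deleteEdges_adj.1 hxy
    refine ⟨p.cons hxy, ?_⟩
    calc walkWeight w (p.cons hxy) ≤ w s(x, y) + ENNReal.ofReal l := by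
          rw [walkWeight_cons]
          gcongr
      _ = ENNReal.ofReal ((w s(x, y)).toNNReal + l) := by
          rw [ENNReal.ofReal_add NNReal.zero_le_coe h.nonneg, ENNReal.ofReal_coe_nnreal,
            ENNReal.coe_toNNReal hfin]
      _ ≤ ENNReal.ofReal l' := ENNReal.ofReal_le_ofReal hl

/- Edges of weight `⊤` are useless for walks of finite length, and on a finite vertex set the
infimum in `gdist` is attained when it is finite. -/
theorem gdist_le_ofReal_iff [Finite V] (hl : 0 ≤ l) :
    gdist G w u v ≤ ENNReal.ofReal l ↔
      WalkWithin (G.deleteEdges (w ⁻¹' {⊤})) (fun e ↦ (w e).toNNReal) Set.univ u v l := by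
  refine ⟨fun h ↦ ?_, fun h ↦ ?_⟩
  · have walk_of_lt : ∀ l' > l, WalkWithin (G.deleteEdges (w ⁻¹' {⊤})) (fun e ↦ (w e).toNNReal)
        Set.univ u v l' := by
      intro l' hl'
      obtain ⟨p, hp⟩ := iInf_lt_iff.1
        (h.trans_lt ((ENNReal.ofReal_lt_ofReal_iff (hl.trans_lt hl')).2 hl'))
      exact (walkWithin_of_walkWeight_ne_top p hp.ne_top).mono_weight
        (ENNReal.toReal_le_of_le_ofReal (hl.trans hl'.le) hp.le)
    obtain ⟨_, rfl, hdist⟩ := exists_walkWithin_distTo (Set.mem_singleton v)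
      (walk_of_lt (l + 1) (lt_add_one l))
    exact hdist.mono_weight
      (le_of_forall_gt_imp_ge_of_dense fun l' hl' ↦ distTo_le rfl (walk_of_lt l' hl'))
  · obtain ⟨p, hp⟩ := exists_walkWeight_le_of_walkWithin h
    exact (iInf_le _ p).trans hp

end ExtendedWeights

theorem multichoose_eq_choose_sub_two_add (n d : ℕ) :
    n.multichoose d = (d + 1 - 2 + n).choose d := by
  cases d with
  | zero => simp
  | succ d =>
    rw [Nat.multichoose_eq]
    congr 1
    omega

theorem stmt_4_general [Finite V] (h : ℕ)
    (ε : ℝ) (hε0 : 0 < ε) (hε8 : ε < 8) (r : ℝ) (hr : 0 < r)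
    (G : SimpleGraph V) (w : Sym2 V → ℝ≥0∞) (hminor : ¬ HasCompleteMinor G h) :
    ∃ 𝒟 : Set (Set V),
      IsCover G w r 𝒟 ∧
      (∀ A ∈ 𝒟, ∀ u ∈ A, ∀ v ∈ A, gdist G w u v ≤ ENNReal.ofReal ((4 + ε) * r)) ∧
      (∀ v : V, ({A | A ∈ 𝒟 ∧ v ∈ A}.ncard : ℝ) ≤
        ((h - 2 + 2 * ⌈24 * (h : ℝ) / ε⌉₊).choose (h - 1) : ℝ) *
          (12 + 48 / ε) * ((h : ℝ) - 1)) := by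
  obtain _ | d := h
  · exact absurd ⟨nofun, nofun, nofun, nofun⟩ hminor
  obtain ⟨𝒟, hcover, hdiam, hoverlap⟩ := exists_cover_of_not_hasCompleteMinor
    (fun hm ↦ hminor (hm.mono (G.deleteEdges_le (w ⁻¹' {⊤})))) (fun e ↦ (w e).toNNReal)
    hε0 hε8 hr
  refine ⟨𝒟, fun v ↦ ?_, fun A hA u hu v hv ↦ ?_, fun v ↦ (hoverlap v).trans ?_⟩
  · obtain ⟨A, hA, hball⟩ := hcover v
    exact ⟨A, hA, fun u hu ↦ hball u ((gdist_le_ofReal_iff hr.le).1 hu)⟩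
  · exact (gdist_le_ofReal_iff (by positivity)).2 (hdiam A hA u hu v hv)
  · rw [multichoose_eq_choose_sub_two_add, Nat.add_sub_cancel, Nat.cast_add_one,
      add_sub_cancel_right]
    have hε : 16 / ε + 6 ≤ 12 + 48 / ε := by
      have : 48 / ε = 3 * (16 / ε) := by ring
      have : 0 < 16 / ε := by positivity
      linarith
    gcongr

theorem stmt_4 {V : Type} [Fintype V] (h : ℕ) (hh : 1 ≤ h)
    (ε : ℝ) (hε0 : 0 < ε) (hε1 : ε ≤ 1) (r : ℝ) (hr : 0 < r)
    (G : SimpleGraph V) (w : Sym2 V → ℝ≥0∞) (hminor : ¬ HasCompleteMinor G h) :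
    ∃ 𝒟 : Set (Set V),
      IsCover G w r 𝒟 ∧
      (∀ A ∈ 𝒟, ∀ u ∈ A, ∀ v ∈ A, gdist G w u v ≤ ENNReal.ofReal ((4 + ε) * r)) ∧
      (∀ v : V, ({A | A ∈ 𝒟 ∧ v ∈ A}.ncard : ℝ) ≤
        ((h - 2 + 2 * ⌈24 * (h : ℝ) / ε⌉₊).choose (h - 1) : ℝ) *
          (12 + 48 / ε) * ((h : ℝ) - 1)) := by
  exact stmt_4_general h ε hε0 (hε1.trans_lt (by norm_num)) r hr G w hminor

end ScatterDim
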